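/- arXiv:1505.01388 — 2 statements merged into one kernel-verified Lean document; each statement's English description precedes it below -/
import Mathlib

section
/- Let α ∈ (1,2), let X be a real Banach space, let {T(t)}_{t>0} be a Riemann-Liouville α-order fractional cosine function on X, and let A be its generator. Then for every x ∈ X and every t > 0, J_t^α T(t)x ∈ D(A) and T(t)x = (t^{α-2}/Γ(α-1)) x + A (J_t^α T(t)x). -/
/-!
Write `S β s` for the operator `y ↦ J^β T(s) y` (`β, s > 0`). By Banach–Steinhaus, conditions (i)
and (ii) give `‖T(σ)‖ ≤ M σ^{α-2}` on bounded intervals, so each `S β s` is bounded and all the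
integrals below converge absolutely. In the lemmas the family `S` is a variable, constrained only
for positive arguments.

The functional equation expresses `Γ(2-α) S₁(a+b)x` through `S_{2-α}(a) S₁(b)x`,
`S₁(a) S_{2-α}(b)x` and an integral with the kernel `(a+b-σ-τ)^{1-α}`. Integrate it in `b` over
`(0,b)`, separately in `a` over `(0,a)`, and subtract. Integrating the kernel
(`integral_kernel`) produces `(a+b-σ-τ)^{2-α}` both times, so that part cancels, and what is left
(`symm_eq`) is
`S_{2-α}(a) S₂(b)x - S₂(a) S_{2-α}(b)x = S₂(b)x - S₂(a)x`.

Let `h(r) = T(r)x - r^{α-2}/Γ(α-1) x`. Since `J^{2-α}` sends `r^{α-2}/Γ(α-1)` to `1`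
(`RLint_sub_power`), `symm_eq` says `(S_{2-α}(s) - I) S₂(r)x = S₂(s) (J^{2-α}h)(r)`. Applying
`J^{α-1}` in `r`, with the semigroup law `RLint_semigroup`, and differentiating gives `key_eq`:
`(S_{2-α}(s) - I) J^αT(t)x = S₂(s) h(t)`.

The left side is exactly the expression `J^{2-α}(T(s)z - s^{α-2}/Γ(α-1) z)` at `z = J^αT(t)x` from
the definition of the generator. By condition (ii), `Γ(α+1) s^{-α} S₂(s)y → y` as `s → 0+`
(`tendsto_J2`), so the limit defining `Az` exists and equals `h(t)`.
-/

open MeasureTheory Filter Topology Set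

/-- Riemann-Liouville fractional integral of order `β` of `f` at `t`:
`J_t^β f(t) = (1/Γ(β)) ∫_0^t (t-σ)^{β-1} f(σ) dσ`. -/
noncomputable def RLint {X : Type*} [NormedAddCommGroup X] [NormedSpace ℝ X]
    (β t : ℝ) (f : ℝ → X) : X :=
  (Real.Gamma β)⁻¹ • ∫ σ in (0:ℝ)..t, (t - σ) ^ (β - 1) • f σ

/-- `{T(t)}_{t>0}` is a Riemann-Liouville `α`-order fractional cosine function. -/
def IsRLFracCosine {X : Type*} [NormedAddCommGroup X] [NormedSpace ℝ X]
    (α : ℝ) (T : ℝ → X →L[ℝ] X) : Prop :=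
  (∀ x : X, ContinuousOn (fun t => T t x) (Set.Ioi (0:ℝ))) ∧
  (∀ x : X, Tendsto (fun t : ℝ => t ^ (2 - α) • T t x) (𝓝[>] (0:ℝ))
      (𝓝 ((Real.Gamma (α - 1))⁻¹ • x))) ∧
  (∀ x : X, ∀ t > (0:ℝ), ∀ s > (0:ℝ),
    Real.Gamma (2 - α) • (∫ σ in (0:ℝ)..(t + s), T σ x) =
      (∫ σ in (0:ℝ)..t, ∫ τ in (0:ℝ)..s, (t - σ) ^ (1 - α) • T σ (T τ x)) +
      (∫ σ in (0:ℝ)..t, ∫ τ in (0:ℝ)..s, (s - τ) ^ (1 - α) • T σ (T τ x)) -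
      (∫ σ in (0:ℝ)..t, ∫ τ in (0:ℝ)..s, (t + s - σ - τ) ^ (1 - α) • T σ (T τ x)))

/-- `GenLimit α T x y` says `x ∈ D(A)` with `Ax = y`, for the generator `A` of
`{T(t)}_{t>0}`:  `y = lim_{t→0+} Γ(α+1) t^{-α} J_t^{2-α}(T(t)x − (t^{α-2}/Γ(α-1)) x)`. -/
def GenLimit {X : Type*} [NormedAddCommGroup X] [NormedSpace ℝ X]
    (α : ℝ) (T : ℝ → X →L[ℝ] X) (x y : X) : Prop :=
  Tendsto (fun t : ℝ => (Real.Gamma (α + 1) * t ^ (-α)) •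
      RLint (2 - α) t (fun r => T r x - (r ^ (α - 2) / Real.Gamma (α - 1)) • x))
    (𝓝[>] (0:ℝ)) (𝓝 y)

/-! ### Beta integrals and the semigroup law -/

lemma RLint_eq_Ioo {X : Type*} [NormedAddCommGroup X] [NormedSpace ℝ X]
    (β : ℝ) {t : ℝ} (ht : 0 ≤ t) (f : ℝ → X) :
    RLint β t f = (Real.Gamma β)⁻¹ • ∫ σ in Ioo 0 t, (t - σ) ^ (β - 1) • f σ := by
  rw [RLint, intervalIntegral.integral_of_le ht, integral_Ioc_eq_integral_Ioo]

lemma beta_zero {β γ b : ℝ} (hβ : 0 < β) (hγ : 0 < γ) (hb : 0 < b) :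
    ∫ σ in (0:ℝ)..b, (b - σ) ^ (β - 1) * σ ^ (γ - 1) =
      Real.Gamma β * Real.Gamma γ / Real.Gamma (β + γ) * b ^ (β + γ - 1) := by
  have h := Complex.betaIntegral_scaled γ β hb
  rw [Complex.betaIntegral_eq_Gamma_mul_div _ _ (by simpa) (by simpa)] at h
  apply Complex.ofReal_injective
  rw [← intervalIntegral.integral_ofReal]
  have h2 : ∫ x in (0:ℝ)..b, (((b - x) ^ (β - 1) * x ^ (γ - 1) : ℝ) : ℂ) =
      ∫ x in (0:ℝ)..b, (x : ℂ) ^ ((γ : ℂ) - 1) * ((b : ℂ) - x) ^ ((β : ℂ) - 1) := by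
    apply intervalIntegral.integral_congr
    intro x hx
    rw [uIcc_of_le hb.le] at hx
    simp only
    rw [Complex.ofReal_mul, Complex.ofReal_cpow (by linarith [hx.2]),
      Complex.ofReal_cpow hx.1]
    push_cast
    ring
  rw [h2, h]
  simp only [← Complex.ofReal_add, Complex.Gamma_ofReal]
  rw [Complex.ofReal_mul, Complex.ofReal_cpow hb.le, add_comm γ β]
  push_cast
  ring

/-- Beta integral over `(c, b)`, together with its convergence. -/
lemma beta_Ioo {β γ b c : ℝ} (hβ : 0 < β) (hγ : 0 < γ) (hb : c < b) :
    IntegrableOn (fun σ => (b - σ) ^ (β - 1) * (σ - c) ^ (γ - 1)) (Ioo c b) ∧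
    ∫ σ in Ioo c b, (b - σ) ^ (β - 1) * (σ - c) ^ (γ - 1) =
      Real.Gamma β * Real.Gamma γ / Real.Gamma (β + γ) * (b - c) ^ (β + γ - 1) := by
  have h : ∫ σ in Ioo c b, (b - σ) ^ (β - 1) * (σ - c) ^ (γ - 1) =
      Real.Gamma β * Real.Gamma γ / Real.Gamma (β + γ) * (b - c) ^ (β + γ - 1) := by
    rw [← beta_zero hβ hγ (sub_pos.2 hb), ← integral_Ioc_eq_integral_Ioo,
      ← intervalIntegral.integral_of_le hb.le]
    have := intervalIntegral.integral_comp_sub_right (a := c) (b := b)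
      (fun σ => (b - c - σ) ^ (β - 1) * σ ^ (γ - 1)) c
    simpa using this
  refine ⟨?_, h⟩
  -- an integral with a nonzero value is not the default value of a divergent one
  by_contra hn
  rw [integral_undef hn] at h
  have := Real.Gamma_pos_of_pos hβ
  have := Real.Gamma_pos_of_pos hγ
  have := Real.Gamma_pos_of_pos (add_pos hβ hγ)
  have := Real.rpow_pos_of_pos (sub_pos.2 hb) (β + γ - 1)
  have : 0 < Real.Gamma β * Real.Gamma γ / Real.Gamma (β + γ) * (b - c) ^ (β + γ - 1) := by
    positivity
  linarith

/-- Semigroup law `J^β J^γ = J^{β+γ}` for integrable functions when `β + γ ≥ 1`, by Fubini on the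
triangle `0 < τ < r < b`. -/
lemma RLint_semigroup {X : Type*} [NormedAddCommGroup X] [NormedSpace ℝ X] [CompleteSpace X]
    {f : ℝ → X} {β γ b : ℝ} (hβ : 0 < β) (hγ : 0 < γ) (hβγ : 1 ≤ β + γ) (hb : 0 < b)
    (hf : IntegrableOn f (Ioo 0 b)) :
    IntegrableOn (fun r => (b - r) ^ (β - 1) • RLint γ r f) (Ioo 0 b) ∧
    RLint β b (fun r => RLint γ r f) = RLint (β + γ) b f := by
  set μ : Measure ℝ := volume.restrict (Ioo 0 b) with hμ
  set κ : ℝ × ℝ → ℝ := {p : ℝ × ℝ | p.2 < p.1}.indicator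
    (fun p => (b - p.1) ^ (β - 1) * (p.1 - p.2) ^ (γ - 1)) with hκ
  have hset : MeasurableSet {p : ℝ × ℝ | p.2 < p.1} :=
    measurableSet_lt measurable_snd measurable_fst
  have hκm : Measurable κ := Measurable.indicator (by fun_prop) hset
  have hκτ : ∀ τ, (fun r => κ (r, τ)) =
      (Ioi τ).indicator (fun r => (b - r) ^ (β - 1) * (r - τ) ^ (γ - 1)) := by
    intro τ; ext r; simp [hκ, indicator]
  have hκr : ∀ r, (fun τ => κ (r, τ) • f τ) =
      (Iio r).indicator (fun τ => (b - r) ^ (β - 1) • (r - τ) ^ (γ - 1) • f τ) := by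
    intro r; ext τ
    by_cases h : τ < r <;> simp [hκ, indicator, h, smul_smul]
  have hI1 : ∀ τ ∈ Ioo 0 b, Ioi τ ∩ Ioo 0 b = Ioo τ b := by
    intro τ hτ; ext r; simp only [mem_inter_iff, mem_Ioi, mem_Ioo]
    exact ⟨fun h => ⟨h.1, h.2.2⟩, fun h => ⟨h.1, hτ.1.trans h.1, h.2⟩⟩
  have hI2 : ∀ r ∈ Ioo 0 b, Iio r ∩ Ioo 0 b = Ioo 0 r := by
    intro r hr; ext τ; simp only [mem_inter_iff, mem_Iio, mem_Ioo]
    exact ⟨fun h => ⟨h.2.1, h.1⟩, fun h => ⟨h.2, h.1, h.2.trans hr.2⟩⟩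
  have hκint : ∀ τ ∈ Ioo 0 b, Integrable (fun r => κ (r, τ)) μ ∧ ∫ r, κ (r, τ) ∂μ =
      Real.Gamma β * Real.Gamma γ / Real.Gamma (β + γ) * (b - τ) ^ (β + γ - 1) := by
    intro τ hτ
    rw [hκτ τ, integrable_indicator_iff measurableSet_Ioi, integral_indicator measurableSet_Ioi,
      IntegrableOn, hμ, Measure.restrict_restrict measurableSet_Ioi, hI1 τ hτ]
    exact beta_Ioo hβ hγ hτ.2
  have hκnn : ∀ r ∈ Ioo 0 b, ∀ τ, 0 ≤ κ (r, τ) := by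
    intro r hr τ
    apply indicator_apply_nonneg
    intro h
    simp only [mem_ofPred_eq] at h
    have := sub_pos.2 h
    have := sub_pos.2 hr.2
    simp only
    positivity
  have hker : Integrable (fun τ => (b - τ) ^ (β + γ - 1) • f τ) μ := by
    apply Integrable.bdd_smul (C := b ^ (β + γ - 1)) hf
    · exact (by fun_prop : Measurable fun τ : ℝ => (b - τ) ^ (β + γ - 1)).aestronglyMeasurable
    · filter_upwards [ae_restrict_mem measurableSet_Ioo] with τ hτ
      rw [Real.norm_of_nonneg (Real.rpow_nonneg (by linarith [hτ.2]) _)]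
      exact Real.rpow_le_rpow (by linarith [hτ.2]) (by linarith [hτ.1]) (by linarith)
  have hInteg : Integrable (Function.uncurry fun r τ => κ (r, τ) • f τ) (μ.prod μ) := by
    have hm : AEStronglyMeasurable (Function.uncurry fun r τ => κ (r, τ) • f τ) (μ.prod μ) :=
      hκm.aestronglyMeasurable.smul hf.aestronglyMeasurable.comp_snd
    rw [integrable_prod_iff' hm]
    constructor
    · filter_upwards [ae_restrict_mem measurableSet_Ioo] with τ hτ
      exact (hκint τ hτ).1.smul_const (f τ)
    · have := (hker.norm.const_mul (Real.Gamma β * Real.Gamma γ / Real.Gamma (β + γ)))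
      refine this.congr ?_
      filter_upwards [ae_restrict_mem measurableSet_Ioo] with τ hτ
      have h1 : ∫ r, ‖κ (r, τ) • f τ‖ ∂μ = ∫ r, κ (r, τ) * ‖f τ‖ ∂μ := by
        apply integral_congr_ae
        filter_upwards [ae_restrict_mem measurableSet_Ioo] with r hr
        rw [norm_smul, Real.norm_of_nonneg (hκnn r hr τ)]
      simp only [Function.uncurry_apply_pair]
      rw [h1, integral_mul_const, (hκint τ hτ).2, norm_smul,
        Real.norm_of_nonneg (Real.rpow_nonneg (by linarith [hτ.2]) _)]
      ring
  have hin : ∀ r ∈ Ioo 0 b, (b - r) ^ (β - 1) • RLint γ r f =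
      (Real.Gamma γ)⁻¹ • ∫ τ, κ (r, τ) • f τ ∂μ := by
    intro r hr
    rw [hκr r, integral_indicator measurableSet_Iio, hμ,
      Measure.restrict_restrict measurableSet_Iio, hI2 r hr, integral_smul,
      RLint_eq_Ioo γ hr.1.le, smul_comm]
  have hin' : (fun r => (b - r) ^ (β - 1) • RLint γ r f) =ᵐ[μ]
      fun r => (Real.Gamma γ)⁻¹ • ∫ τ, κ (r, τ) • f τ ∂μ := by
    filter_upwards [ae_restrict_mem measurableSet_Ioo] with r hr using hin r hr
  constructor
  · exact (hInteg.integral_prod_left.smul (Real.Gamma γ)⁻¹).congr hin'.symm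
  · rw [RLint_eq_Ioo β hb.le, RLint_eq_Ioo (β + γ) hb.le, integral_congr_ae hin',
      integral_smul, integral_integral_swap hInteg]
    have : ∫ τ, ∫ r, κ (r, τ) • f τ ∂μ ∂μ = ∫ τ, (Real.Gamma β * Real.Gamma γ /
        Real.Gamma (β + γ)) • (b - τ) ^ (β + γ - 1) • f τ ∂μ := by
      apply integral_congr_ae
      filter_upwards [ae_restrict_mem measurableSet_Ioo] with τ hτ
      rw [integral_smul_const, (hκint τ hτ).2, smul_smul]
    rw [this, integral_smul, smul_smul, smul_smul]
    congr 1
    have := (Real.Gamma_pos_of_pos hβ).ne'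
    have := (Real.Gamma_pos_of_pos hγ).ne'
    field_simp

/-! ### Kernel integrals over rectangles -/

lemma integrableOn_rpow_Ioo {γ a : ℝ} (hγ : 0 < γ) (ha : 0 < a) :
    IntegrableOn (fun σ : ℝ => σ ^ (γ - 1)) (Ioo 0 a) := by
  have := (beta_Ioo one_pos hγ ha).1
  simpa using this

/-- Integrable majorant for every kernel integral below: when `σ < a` and `τ < r`, the kernel
`(a+r-σ-τ)^{1-α}` is at most `(a-σ)^{1-α}`, uniformly in `r`, because its exponent is negative. -/
lemma integrableOn_majorant {α a b : ℝ} (hα : α ∈ Ioo (1:ℝ) 2) (M : ℝ) (ha : 0 < a) (hb : 0 < b) :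
    IntegrableOn (fun p : ℝ × ℝ => (a - p.1) ^ (1 - α) * (M * p.1 ^ (α - 2) * p.2 ^ (α - 2)))
      (Ioo 0 a ×ˢ Ioo 0 b) := by
  have h1 := (beta_Ioo (β := 2 - α) (γ := α - 1) (by linarith [hα.2]) (by linarith [hα.1]) ha).1
  have h2 := integrableOn_rpow_Ioo (γ := α - 1) (by linarith [hα.1]) hb
  have h3 := Integrable.mul_prod (h1.const_mul M) h2
  rw [Measure.prod_restrict] at h3
  refine h3.congr (ae_of_all _ fun p => ?_)
  simp only [sub_zero, show 2 - α - 1 = 1 - α by ring, show α - 1 - 1 = α - 2 by ring]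
  ring

lemma integrableOn_kernel {X : Type*} [NormedAddCommGroup X] [NormedSpace ℝ X]
    {α a b M : ℝ} (hα : α ∈ Ioo (1:ℝ) 2) (ha : 0 < a) (hb : 0 < b) {H : ℝ × ℝ → X}
    (hHm : AEStronglyMeasurable H (volume.restrict (Ioo 0 a ×ˢ Ioo 0 b)))
    (hHb : ∀ σ ∈ Ioo 0 a, ∀ τ ∈ Ioo 0 b, ‖H (σ, τ)‖ ≤ M * σ ^ (α - 2) * τ ^ (α - 2)) :
    IntegrableOn (fun p => (a + b - p.1 - p.2) ^ (1 - α) • H p) (Ioo 0 a ×ˢ Ioo 0 b) := by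
  refine Integrable.mono' (integrableOn_majorant hα M ha hb) ?_ ?_
  · exact (by fun_prop : Measurable fun p : ℝ × ℝ =>
      (a + b - p.1 - p.2) ^ (1 - α)).aestronglyMeasurable.smul hHm
  · filter_upwards [ae_restrict_mem (measurableSet_Ioo.prod measurableSet_Ioo)] with p hp
    have h1 : 0 < a - p.1 := sub_pos.2 hp.1.2
    have h2 : 0 < b - p.2 := sub_pos.2 hp.2.2
    rw [norm_smul, Real.norm_of_nonneg (Real.rpow_nonneg (by linarith) _)]
    apply mul_le_mul _ (hHb _ hp.1 _ hp.2) (norm_nonneg _) (Real.rpow_nonneg h1.le _)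
    exact Real.rpow_le_rpow_of_nonpos h1 (by linarith) (by linarith [hα.1])

lemma integrableOn_of_bound {X : Type*} [NormedAddCommGroup X]
    {α a b M : ℝ} (hα : α ∈ Ioo (1:ℝ) 2) (ha : 0 < a) (hb : 0 < b) {H : ℝ × ℝ → X}
    (hHm : AEStronglyMeasurable H (volume.restrict (Ioo 0 a ×ˢ Ioo 0 b)))
    (hHb : ∀ σ ∈ Ioo 0 a, ∀ τ ∈ Ioo 0 b, ‖H (σ, τ)‖ ≤ M * σ ^ (α - 2) * τ ^ (α - 2)) :
    IntegrableOn H (Ioo 0 a ×ˢ Ioo 0 b) := by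
  have h1 := integrableOn_rpow_Ioo (γ := α - 1) (by linarith [hα.1]) ha
  have h2 := integrableOn_rpow_Ioo (γ := α - 1) (by linarith [hα.1]) hb
  have h3 := Integrable.mul_prod (h1.const_mul M) h2
  rw [Measure.prod_restrict] at h3
  refine Integrable.mono' h3 hHm ?_
  filter_upwards [ae_restrict_mem (measurableSet_Ioo.prod measurableSet_Ioo)] with p hp
  have := hHb _ hp.1 _ hp.2
  rwa [show α - 2 = α - 1 - 1 by ring] at this

/-- Integrating `∫_0^a ∫_0^r (a+r-σ-τ)^{1-α} H(σ,τ) dτ dσ` in `r` over `(0,b)`, by Fubini. -/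
lemma integral_kernel {X : Type*} [NormedAddCommGroup X] [NormedSpace ℝ X] [CompleteSpace X]
    {α a b M : ℝ} (hα : α ∈ Ioo (1:ℝ) 2) (ha : 0 < a) (hb : 0 < b) {H : ℝ × ℝ → X}
    (hHm : AEStronglyMeasurable H (volume.restrict (Ioo 0 a ×ˢ Ioo 0 b)))
    (hHb : ∀ σ ∈ Ioo 0 a, ∀ τ ∈ Ioo 0 b, ‖H (σ, τ)‖ ≤ M * σ ^ (α - 2) * τ ^ (α - 2)) :
    IntegrableOn (fun r => ∫ p in Ioo 0 a ×ˢ Ioo 0 r, (a + r - p.1 - p.2) ^ (1 - α) • H p)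
      (Ioo 0 b) ∧
    ∫ r in Ioo 0 b, ∫ p in Ioo 0 a ×ˢ Ioo 0 r, (a + r - p.1 - p.2) ^ (1 - α) • H p =
      ∫ p in Ioo 0 a ×ˢ Ioo 0 b,
        (((a + b - p.1 - p.2) ^ (2 - α) - (a - p.1) ^ (2 - α)) / (2 - α)) • H p := by
  set μ : Measure ℝ := volume.restrict (Ioo 0 b) with hμ
  set ν : Measure (ℝ × ℝ) := volume.restrict (Ioo 0 a ×ˢ Ioo 0 b) with hν
  set κ : ℝ × ℝ × ℝ → ℝ := {q : ℝ × ℝ × ℝ | q.2.2 < q.1}.indicator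
    (fun q => (a + q.1 - q.2.1 - q.2.2) ^ (1 - α)) with hκ
  have hmem : ∀ᵐ p ∂ν, p ∈ Ioo 0 a ×ˢ Ioo 0 b :=
    ae_restrict_mem (measurableSet_Ioo.prod measurableSet_Ioo)
  have hκm : Measurable κ := Measurable.indicator (by fun_prop)
    (measurableSet_lt (by fun_prop) (by fun_prop))
  have hInteg : Integrable (Function.uncurry fun r p => κ (r, p) • H p) (μ.prod ν) := by
    refine Integrable.mono' (Integrable.comp_snd (integrableOn_majorant hα M ha hb) μ) ?_ ?_
    · exact hκm.aestronglyMeasurable.smul hHm.comp_snd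
    · filter_upwards [Measure.quasiMeasurePreserving_snd.ae hmem] with q hp
      obtain ⟨r, p⟩ := q
      simp only at hp
      have h1 : 0 < a - p.1 := sub_pos.2 hp.1.2
      simp only [Function.uncurry_apply_pair]
      rw [norm_smul]
      apply mul_le_mul _ (hHb _ hp.1 _ hp.2) (norm_nonneg _) (Real.rpow_nonneg h1.le _)
      by_cases h : p.2 < r
      · have : κ (r, p) = (a + r - p.1 - p.2) ^ (1 - α) := by simp [hκ, h]
        rw [this, Real.norm_of_nonneg (Real.rpow_nonneg (by linarith) _)]
        exact Real.rpow_le_rpow_of_nonpos h1 (by linarith) (by linarith [hα.1])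
      · have : κ (r, p) = 0 := by simp [hκ, h]
        rw [this, norm_zero]
        exact Real.rpow_nonneg h1.le _
  have hin : ∀ r ∈ Ioo 0 b, ∫ p, κ (r, p) • H p ∂ν =
      ∫ p in Ioo 0 a ×ˢ Ioo 0 r, (a + r - p.1 - p.2) ^ (1 - α) • H p := by
    intro r hr
    have hs : MeasurableSet {p : ℝ × ℝ | p.2 < r} := measurableSet_lt (by fun_prop) (by fun_prop)
    have h1 : (fun p => κ (r, p) • H p) = {p : ℝ × ℝ | p.2 < r}.indicator
        (fun p => (a + r - p.1 - p.2) ^ (1 - α) • H p) := by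
      ext p
      by_cases h : p.2 < r <;> simp [hκ, indicator, h]
    have h2 : {p : ℝ × ℝ | p.2 < r} ∩ Ioo 0 a ×ˢ Ioo 0 b = Ioo 0 a ×ˢ Ioo 0 r := by
      ext p
      simp only [mem_inter_iff, mem_ofPred_eq, mem_prod, mem_Ioo]
      exact ⟨fun h => ⟨h.2.1, h.2.2.1, h.1⟩,
        fun h => ⟨h.2.2, h.1, h.2.1, h.2.2.trans hr.2⟩⟩
    rw [h1, integral_indicator hs, hν, Measure.restrict_restrict hs, h2]
  have hin' : (fun r => ∫ p, κ (r, p) • H p ∂ν) =ᵐ[μ]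
      fun r => ∫ p in Ioo 0 a ×ˢ Ioo 0 r, (a + r - p.1 - p.2) ^ (1 - α) • H p := by
    filter_upwards [ae_restrict_mem measurableSet_Ioo] with r hr using hin r hr
  refine ⟨hInteg.integral_prod_left.congr hin', ?_⟩
  rw [← integral_congr_ae hin', integral_integral_swap hInteg]
  apply integral_congr_ae
  filter_upwards [hmem] with p hp
  rw [integral_smul_const]
  congr 1
  have h1 : (fun r => κ (r, p)) = (Ioi p.2).indicator
      (fun r => (r + (a - p.1 - p.2)) ^ (1 - α)) := by
    ext r
    by_cases h : p.2 < r
    · simp only [hκ, indicator, h, mem_ofPred_eq, mem_Ioi, if_true]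
      congr 1; ring
    · simp [hκ, indicator, h]
  have h2 : Ioi p.2 ∩ Ioo 0 b = Ioo p.2 b := by
    ext r; simp only [mem_inter_iff, mem_Ioi, mem_Ioo]
    exact ⟨fun h => ⟨h.1, h.2.2⟩, fun h => ⟨h.1, hp.2.1.trans h.1, h.2⟩⟩
  rw [h1, integral_indicator measurableSet_Ioi, hμ, Measure.restrict_restrict measurableSet_Ioi,
    h2, ← integral_Ioc_eq_integral_Ioo, ← intervalIntegral.integral_of_le hp.2.2.le,
    intervalIntegral.integral_comp_add_right (fun u => u ^ (1 - α)),
    integral_rpow (Or.inl (by linarith [hα.2]))]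
  rw [show 1 - α + 1 = 2 - α by ring, show b + (a - p.1 - p.2) = a + b - p.1 - p.2 by ring,
    show p.2 + (a - p.1 - p.2) = a - p.1 by ring]

/-! ### Bounds and measurability for `T` -/

/-- By Banach–Steinhaus, `‖T(σ)‖ ≤ M σ^{α-2}` on every bounded interval `(0, c]`. -/
lemma IsRLFracCosine.exists_bound {X : Type*} [NormedAddCommGroup X] [NormedSpace ℝ X]
    [CompleteSpace X] {α : ℝ} {T : ℝ → X →L[ℝ] X} (hT : IsRLFracCosine α T) (c : ℝ) :
    ∃ M : ℝ, 0 ≤ M ∧ ∀ σ ∈ Ioc 0 c, ‖T σ‖ ≤ M * σ ^ (α - 2) := by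
  obtain ⟨h1, h2, -⟩ := hT
  have key : ∃ C, ∀ i : Ioc (0:ℝ) c, ‖((i:ℝ) ^ (2 - α)) • T i‖ ≤ C := by
    apply banach_steinhaus
    intro x
    have hb : ∀ᶠ t in 𝓝[>] (0:ℝ), ‖t ^ (2 - α) • T t x‖ < ‖(Real.Gamma (α - 1))⁻¹ • x‖ + 1 :=
      (h2 x).norm.eventually_lt_const (by linarith)
    obtain ⟨δ, hδ, hδb⟩ := mem_nhdsGT_iff_exists_Ioo_subset.1 hb
    have hδ0 : 0 < δ := hδ
    have hcont : ContinuousOn (fun t : ℝ => t ^ (2 - α) • T t x) (Icc δ c) := by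
      apply ContinuousOn.smul
      · intro t ht
        exact (Real.continuousAt_rpow_const t _
          (Or.inl (hδ0.trans_le ht.1).ne')).continuousWithinAt
      · exact (h1 x).mono fun t ht => hδ0.trans_le ht.1
    obtain ⟨C, hC⟩ := isCompact_Icc.exists_bound_of_continuousOn hcont
    refine ⟨max C (‖(Real.Gamma (α - 1))⁻¹ • x‖ + 1), fun i => ?_⟩
    rw [smul_apply]
    by_cases h : (i:ℝ) < δ
    · exact le_max_of_le_right (hδb ⟨i.2.1, h⟩ : _ < _).le
    · exact le_max_of_le_left (hC _ ⟨not_lt.1 h, i.2.2⟩)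
  obtain ⟨C, hC⟩ := key
  refine ⟨max C 0, le_max_right _ _, fun σ hσ => ?_⟩
  have h := hC ⟨σ, hσ⟩
  simp only at h
  have hp := Real.rpow_pos_of_pos hσ.1 (2 - α)
  rw [norm_smul, Real.norm_of_nonneg hp.le] at h
  rw [show α - 2 = -(2 - α) by ring, Real.rpow_neg hσ.1.le, ← div_eq_mul_inv, le_div_iff₀ hp,
    mul_comm]
  exact h.trans (le_max_left _ _)

lemma IsRLFracCosine.integrableOn {X : Type*} [NormedAddCommGroup X] [NormedSpace ℝ X]
    [CompleteSpace X] {α : ℝ} (hα : α ∈ Ioo (1:ℝ) 2) {T : ℝ → X →L[ℝ] X}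
    (hT : IsRLFracCosine α T) (y : X) {β s : ℝ} (hβ : 0 < β) (hs : 0 < s) :
    IntegrableOn (fun σ => (s - σ) ^ (β - 1) • T σ y) (Ioo 0 s) := by
  obtain ⟨M, hM, hb⟩ := hT.exists_bound s
  have h1 := (beta_Ioo (γ := α - 1) hβ (by linarith [hα.1]) hs).1.const_mul (M * ‖y‖)
  refine Integrable.mono' h1 ?_ ?_
  · refine (by fun_prop : Measurable fun σ : ℝ => (s - σ) ^ (β - 1)).aestronglyMeasurable.smul ?_
    exact ((hT.1 y).mono fun σ hσ => hσ.1).aestronglyMeasurable measurableSet_Ioo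
  · filter_upwards [ae_restrict_mem measurableSet_Ioo] with σ hσ
    have hp : 0 ≤ (s - σ) ^ (β - 1) := Real.rpow_nonneg (by linarith [hσ.2]) _
    rw [norm_smul, Real.norm_of_nonneg hp, sub_zero, show α - 1 - 1 = α - 2 by ring]
    calc (s - σ) ^ (β - 1) * ‖T σ y‖ ≤ (s - σ) ^ (β - 1) * (M * σ ^ (α - 2) * ‖y‖) := by
          gcongr
          exact (T σ).le_of_opNorm_le (hb σ ⟨hσ.1, hσ.2.le⟩) y
      _ = _ := by ring

lemma IsRLFracCosine.integrableOn' {X : Type*} [NormedAddCommGroup X] [NormedSpace ℝ X]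
    [CompleteSpace X] {α : ℝ} (hα : α ∈ Ioo (1:ℝ) 2) {T : ℝ → X →L[ℝ] X}
    (hT : IsRLFracCosine α T) (y : X) {s : ℝ} (hs : 0 < s) :
    IntegrableOn (fun σ => T σ y) (Ioo 0 s) := by
  simpa using hT.integrableOn hα y one_pos hs

/-- `y ↦ J^β T(s) y` is a bounded operator. -/
lemma IsRLFracCosine.exists_op {X : Type*} [NormedAddCommGroup X] [NormedSpace ℝ X]
    [CompleteSpace X] {α : ℝ} (hα : α ∈ Ioo (1:ℝ) 2) {T : ℝ → X →L[ℝ] X}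
    (hT : IsRLFracCosine α T) {β s : ℝ} (hβ : 0 < β) (hs : 0 < s) :
    ∃ S : X →L[ℝ] X, ∀ y, S y = RLint β s (fun σ => T σ y) := by
  obtain ⟨M, hM, hb⟩ := hT.exists_bound s
  let L : X →ₗ[ℝ] X :=
    { toFun := fun y => RLint β s (fun σ => T σ y)
      map_add' := fun y z => by
        simp only [RLint_eq_Ioo β hs.le, map_add, smul_add]
        rw [integral_add (hT.integrableOn hα y hβ hs) (hT.integrableOn hα z hβ hs), smul_add]
      map_smul' := fun c y => by
        simp only [RLint_eq_Ioo β hs.le, map_smul, RingHom.id_apply]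
        simp_rw [smul_comm _ c]
        rw [integral_smul, smul_comm] }
  refine ⟨L.mkContinuous (|(Real.Gamma β)⁻¹| *
    (M * ∫ σ in Ioo 0 s, (s - σ) ^ (β - 1) * (σ - 0) ^ (α - 1 - 1))) fun y => ?_, fun y => rfl⟩
  change ‖RLint β s (fun σ => T σ y)‖ ≤ _
  rw [RLint_eq_Ioo β hs.le, norm_smul, Real.norm_eq_abs, mul_assoc]
  gcongr
  have h1 := (beta_Ioo (γ := α - 1) hβ (by linarith [hα.1]) hs).1.const_mul (M * ‖y‖)
  rw [mul_assoc, mul_comm _ ‖y‖, ← mul_assoc, ← integral_const_mul]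
  apply norm_integral_le_of_norm_le h1
  filter_upwards [ae_restrict_mem measurableSet_Ioo] with σ hσ
  have hp : 0 ≤ (s - σ) ^ (β - 1) := Real.rpow_nonneg (by linarith [hσ.2]) _
  rw [norm_smul, Real.norm_of_nonneg hp, sub_zero, show α - 1 - 1 = α - 2 by ring]
  calc (s - σ) ^ (β - 1) * ‖T σ y‖ ≤ (s - σ) ^ (β - 1) * (M * σ ^ (α - 2) * ‖y‖) := by
        gcongr
        exact (T σ).le_of_opNorm_le (hb σ ⟨hσ.1, hσ.2.le⟩) y
    _ = _ := by ring

/-- Joint continuity, from strong continuity and local boundedness of `‖T(σ)‖`. -/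
lemma IsRLFracCosine.continuousOn_comp {X : Type*} [NormedAddCommGroup X] [NormedSpace ℝ X]
    [CompleteSpace X] {α : ℝ} {T : ℝ → X →L[ℝ] X} (hT : IsRLFracCosine α T) (x : X) :
    ContinuousOn (fun p : ℝ × ℝ => T p.1 (T p.2 x)) (Ioi 0 ×ˢ Ioi 0) := by
  rintro ⟨σ, τ⟩ ⟨hσ, hτ⟩
  simp only [mem_Ioi] at hσ hτ
  apply ContinuousAt.continuousWithinAt
  obtain ⟨M, hM, hb⟩ := hT.exists_bound (σ + 1)
  have hc1 : ContinuousAt (fun p : ℝ × ℝ => T p.1 (T τ x)) (σ, τ) :=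
    ((hT.1 (T τ x)).continuousAt (Ioi_mem_nhds hσ)).comp (f := Prod.fst)
      (x := ((σ, τ) : ℝ × ℝ)) continuousAt_fst
  have hc2 : ContinuousAt (fun p : ℝ × ℝ => T p.2 x) (σ, τ) :=
    ((hT.1 x).continuousAt (Ioi_mem_nhds hτ)).comp (f := Prod.snd)
      (x := ((σ, τ) : ℝ × ℝ)) continuousAt_snd
  have hc3 : ContinuousAt (fun p : ℝ × ℝ => M * p.1 ^ (α - 2)) (σ, τ) :=
    continuousAt_const.mul
      ((Real.continuousAt_rpow_const σ _ (Or.inl hσ.ne')).comp (f := Prod.fst)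
      (x := ((σ, τ) : ℝ × ℝ)) continuousAt_fst)
  have hz : Tendsto (fun p : ℝ × ℝ => T p.1 (T p.2 x - T τ x)) (𝓝 (σ, τ)) (𝓝 0) := by
    apply squeeze_zero_norm' (a := fun p : ℝ × ℝ => M * p.1 ^ (α - 2) * ‖T p.2 x - T τ x‖)
    · have : ∀ᶠ p : ℝ × ℝ in 𝓝 (σ, τ), p.1 ∈ Ioc 0 (σ + 1) :=
        (continuousAt_fst (p := ((σ, τ) : ℝ × ℝ))).eventually_mem
          (Ioc_mem_nhds hσ (by simp))
      filter_upwards [this] with p hp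
      exact (T p.1).le_of_opNorm_le (hb _ hp) _
    · have := hc3.tendsto.mul ((hc2.tendsto.sub_const (T τ x)).norm)
      simpa using this
  have := hz.add hc1.tendsto
  simpa [ContinuousAt] using this

/-! ### The symmetrised functional equation -/

/-- Iterated integrals with product kernels are, up to `Γ(β) Γ(γ)`, compositions `J^β T(a) ∘ J^γ T(b)`. -/
lemma iterated_eq_op {X : Type*} [NormedAddCommGroup X] [NormedSpace ℝ X]
    [CompleteSpace X] {α : ℝ} (hα : α ∈ Ioo (1:ℝ) 2) {T : ℝ → X →L[ℝ] X}
    (hT : IsRLFracCosine α T) {S : ℝ → ℝ → X →L[ℝ] X}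
    (hS : ∀ β s, 0 < β → 0 < s → ∀ y, S β s y = RLint β s (fun σ => T σ y)) (x : X)
    {β γ a b : ℝ} (hβ : 0 < β) (hγ : 0 < γ) (ha : 0 < a) (hb : 0 < b) :
    ∫ σ in Ioo 0 a, ∫ τ in Ioo 0 b, ((a - σ) ^ (β - 1) * (b - τ) ^ (γ - 1)) • T σ (T τ x) =
      (Real.Gamma β * Real.Gamma γ) • S β a (S γ b x) := by
  have hβ' := (Real.Gamma_pos_of_pos hβ).ne'
  have hγ' := (Real.Gamma_pos_of_pos hγ).ne'
  have h1 : ∀ σ, ∫ τ in Ioo 0 b, ((a - σ) ^ (β - 1) * (b - τ) ^ (γ - 1)) • T σ (T τ x) =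
      Real.Gamma γ • (a - σ) ^ (β - 1) • T σ (S γ b x) := by
    intro σ
    simp_rw [mul_smul]
    rw [integral_smul]
    have h0 : ∀ τ, (b - τ) ^ (γ - 1) • T σ (T τ x) = T σ ((b - τ) ^ (γ - 1) • T τ x) :=
      fun τ => (map_smul _ _ _).symm
    simp_rw [h0]
    rw [ContinuousLinearMap.integral_comp_comm _ (hT.integrableOn hα x hγ hb), hS γ b hγ hb,
      RLint_eq_Ioo γ hb.le, map_smul, smul_smul, smul_smul]
    congr 1
    field_simp
  simp_rw [h1]
  rw [integral_smul, hS β a hβ ha, RLint_eq_Ioo β ha.le, smul_smul]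
  congr 1
  field_simp

lemma RLint_one {X : Type*} [NormedAddCommGroup X] [NormedSpace ℝ X] {t : ℝ} (ht : 0 ≤ t)
    (f : ℝ → X) : RLint 1 t f = ∫ σ in Ioo 0 t, f σ := by
  rw [RLint_eq_Ioo 1 ht]; simp

lemma map_RLint {X : Type*} [NormedAddCommGroup X] [NormedSpace ℝ X] [CompleteSpace X]
    (L : X →L[ℝ] X) {β t : ℝ} (ht : 0 ≤ t) {f : ℝ → X}
    (hf : IntegrableOn (fun σ => (t - σ) ^ (β - 1) • f σ) (Ioo 0 t)) :
    L (RLint β t f) = RLint β t (fun σ => L (f σ)) := by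
  rw [RLint_eq_Ioo β ht, RLint_eq_Ioo β ht, map_smul, ← L.integral_comp_comm hf]
  simp

/-- `∫_0^t J^β T(r) y dr = J^{β+1} T(t) y`. -/
lemma integral_op {X : Type*} [NormedAddCommGroup X] [NormedSpace ℝ X]
    [CompleteSpace X] {α : ℝ} (hα : α ∈ Ioo (1:ℝ) 2) {T : ℝ → X →L[ℝ] X}
    (hT : IsRLFracCosine α T) {S : ℝ → ℝ → X →L[ℝ] X}
    (hS : ∀ β s, 0 < β → 0 < s → ∀ y, S β s y = RLint β s (fun σ => T σ y)) (y : X)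
    {β t : ℝ} (hβ : 0 < β) (ht : 0 < t) :
    IntegrableOn (fun r => S β r y) (Ioo 0 t) ∧ ∫ r in Ioo 0 t, S β r y = S (β + 1) t y := by
  have h := RLint_semigroup one_pos hβ (by linarith) ht (hT.integrableOn' hα y ht)
  simp only [sub_self, Real.rpow_zero, one_smul] at h
  rw [RLint_one ht.le] at h
  have heq : (fun r => RLint β r (fun σ => T σ y)) =ᵐ[volume.restrict (Ioo 0 t)]
      fun r => S β r y := by
    filter_upwards [ae_restrict_mem measurableSet_Ioo] with r hr
    rw [hS β r hβ hr.1]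
  refine ⟨h.1.congr heq, ?_⟩
  rw [← integral_congr_ae heq, h.2, hS (β + 1) t (by linarith) ht, add_comm]

/-- The functional equation rewritten with the operators `S β s = J^β T(s)`. -/
lemma functional_eq {X : Type*} [NormedAddCommGroup X] [NormedSpace ℝ X]
    [CompleteSpace X] {α : ℝ} (hα : α ∈ Ioo (1:ℝ) 2) {T : ℝ → X →L[ℝ] X}
    (hT : IsRLFracCosine α T) {S : ℝ → ℝ → X →L[ℝ] X}
    (hS : ∀ β s, 0 < β → 0 < s → ∀ y, S β s y = RLint β s (fun σ => T σ y)) (x : X)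
    {a b : ℝ} (ha : 0 < a) (hb : 0 < b)
    (hInteg : IntegrableOn (fun p : ℝ × ℝ => (a + b - p.1 - p.2) ^ (1 - α) • T p.1 (T p.2 x))
      (Ioo 0 a ×ˢ Ioo 0 b)) :
    Real.Gamma (2 - α) • S 1 (a + b) x =
      Real.Gamma (2 - α) • S (2 - α) a (S 1 b x) + Real.Gamma (2 - α) • S 1 a (S (2 - α) b x) -
      ∫ p in Ioo 0 a ×ˢ Ioo 0 b, (a + b - p.1 - p.2) ^ (1 - α) • T p.1 (T p.2 x) := by
  have h2α : 0 < 2 - α := by linarith [hα.2]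
  have h := hT.2.2 x a ha b hb
  have h1 := iterated_eq_op hα hT hS x h2α one_pos ha hb
  have h2 := iterated_eq_op hα hT hS x one_pos h2α ha hb
  simp only [sub_self, Real.rpow_zero, mul_one, one_mul, Real.Gamma_one,
    show 2 - α - 1 = 1 - α by ring] at h1 h2
  simp only [intervalIntegral.integral_of_le ha.le, intervalIntegral.integral_of_le hb.le,
    intervalIntegral.integral_of_le (add_pos ha hb).le, integral_Ioc_eq_integral_Ioo] at h
  rw [h1, h2] at h
  rw [hS 1 (a + b) one_pos (add_pos ha hb), RLint_one (add_pos ha hb).le, h,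
    Measure.volume_eq_prod, setIntegral_prod _ hInteg]

/-- Symmetrised functional equation: with `S β s = J^β T(s)`,
`S_{2-α}(a) S_2(b) x - S_2(a) S_{2-α}(b) x = S_2(b) x - S_2(a) x`.
It is obtained by integrating the functional equation in `b`, in `a`, and subtracting. -/
lemma symm_eq {X : Type*} [NormedAddCommGroup X] [NormedSpace ℝ X]
    [CompleteSpace X] {α : ℝ} (hα : α ∈ Ioo (1:ℝ) 2) {T : ℝ → X →L[ℝ] X}
    (hT : IsRLFracCosine α T) {S : ℝ → ℝ → X →L[ℝ] X}
    (hS : ∀ β s, 0 < β → 0 < s → ∀ y, S β s y = RLint β s (fun σ => T σ y)) (x : X)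
    {a b : ℝ} (ha : 0 < a) (hb : 0 < b) :
    S (2 - α) a (S 2 b x) - S 2 a (S (2 - α) b x) = S 2 b x - S 2 a x := by
  have h2α : 0 < 2 - α := by linarith [hα.2]
  set g := Real.Gamma (2 - α) with hg
  have hg0 : 0 < g := Real.Gamma_pos_of_pos h2α
  set H : ℝ × ℝ → X := fun p => T p.1 (T p.2 x) with hH
  obtain ⟨M, hM, hMb⟩ := hT.exists_bound (max a b)
  have hHc : ∀ a' b' : ℝ,
      AEStronglyMeasurable H (volume.restrict (Ioo 0 a' ×ˢ Ioo 0 b')) := fun a' b' =>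
    ((hT.continuousOn_comp x).mono
      (prod_mono (fun _ h => h.1) (fun _ h => h.1))).aestronglyMeasurable
      (measurableSet_Ioo.prod measurableSet_Ioo)
  have hHb : ∀ σ ∈ Ioc 0 (max a b), ∀ τ ∈ Ioc 0 (max a b),
      ‖H (σ, τ)‖ ≤ (M * M * ‖x‖) * σ ^ (α - 2) * τ ^ (α - 2) := by
    intro σ hσ τ hτ
    have hp : 0 ≤ σ ^ (α - 2) := Real.rpow_nonneg hσ.1.le _
    calc ‖T σ (T τ x)‖ ≤ M * σ ^ (α - 2) * ‖T τ x‖ := (T σ).le_of_opNorm_le (hMb σ hσ) _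
      _ ≤ M * σ ^ (α - 2) * (M * τ ^ (α - 2) * ‖x‖) := by
          gcongr
          exact (T τ).le_of_opNorm_le (hMb τ hτ) _
      _ = _ := by ring
  have hHb' : ∀ a' ≤ max a b, ∀ b' ≤ max a b, ∀ σ ∈ Ioo 0 a', ∀ τ ∈ Ioo 0 b',
      ‖H (σ, τ)‖ ≤ (M * M * ‖x‖) * σ ^ (α - 2) * τ ^ (α - 2) :=
    fun a' ha' b' hb' σ hσ τ hτ =>
      hHb σ ⟨hσ.1, hσ.2.le.trans ha'⟩ τ ⟨hτ.1, hτ.2.le.trans hb'⟩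
  set D : ℝ → ℝ → X := fun a b =>
    ∫ p in Ioo 0 a ×ˢ Ioo 0 b, (a + b - p.1 - p.2) ^ (1 - α) • H p with hD
  have hFE : ∀ a' ∈ Ioc 0 (max a b), ∀ b' ∈ Ioc 0 (max a b), g • S 1 (a' + b') x =
      g • S (2 - α) a' (S 1 b' x) + g • S 1 a' (S (2 - α) b' x) - D a' b' := by
    intro a' ha' b' hb'
    exact functional_eq hα hT hS x ha'.1 hb'.1
      (integrableOn_kernel hα ha'.1 hb'.1 (hHc _ _) (hHb' _ ha'.2 _ hb'.2))
  have hJb : ∫ r in Ioo 0 b, g • S 1 (a + r) x =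
      g • S (2 - α) a (S 2 b x) + g • S 1 a (S (3 - α) b x) - ∫ r in Ioo 0 b, D a r := by
    have e1 := integral_op hα hT hS x one_pos hb
    have e2 := integral_op hα hT hS x h2α hb
    have e3 := (integral_kernel hα ha hb (hHc _ _) (hHb' _ (le_max_left _ _) _ (le_max_right _ _))).1
    have i1 : Integrable (fun r => g • S (2 - α) a (S 1 r x)) (volume.restrict (Ioo 0 b)) :=
      ((S (2 - α) a).integrable_comp e1.1).smul g
    have i2 : Integrable (fun r => g • S 1 a (S (2 - α) r x)) (volume.restrict (Ioo 0 b)) :=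
      ((S 1 a).integrable_comp e2.1).smul g
    have i3 : Integrable (fun r => g • S (2 - α) a (S 1 r x) + g • S 1 a (S (2 - α) r x))
      (volume.restrict (Ioo 0 b)) := i1.add i2
    rw [one_add_one_eq_two] at e1
    rw [show 2 - α + 1 = 3 - α by ring] at e2
    rw [← e1.2, ← e2.2, ← ContinuousLinearMap.integral_comp_comm _ e1.1,
      ← ContinuousLinearMap.integral_comp_comm _ e2.1, ← integral_smul, ← integral_smul,
      ← integral_add i1 i2, ← integral_sub i3 e3]
    apply setIntegral_congr_fun measurableSet_Ioo
    intro r hr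
    exact hFE a ⟨ha, le_max_left _ _⟩ r ⟨hr.1, hr.2.le.trans (le_max_right _ _)⟩
  -- Exchanging the two variables reduces integration of `D` in its first variable to
  -- `integral_kernel`, which integrates in the second.
  have hDswap : ∀ r, D r b = ∫ p in Ioo 0 b ×ˢ Ioo 0 r,
      (b + r - p.1 - p.2) ^ (1 - α) • (H ∘ Prod.swap) p := by
    intro r
    simp only [hD]
    rw [Measure.volume_eq_prod, ← setIntegral_prod_swap]
    congr 1
    ext p
    simp only [Prod.fst_swap, Prod.snd_swap, Function.comp]
    congr 2; ring
  have hK2 := integral_kernel hα hb ha (H := H ∘ Prod.swap) (M := M * M * ‖x‖)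
    (((hT.continuousOn_comp x).comp (t := Ioi 0 ×ˢ Ioi 0) continuous_swap.continuousOn
      (fun p hp => ⟨hp.2.1, hp.1.1⟩)).aestronglyMeasurable
      (measurableSet_Ioo.prod measurableSet_Ioo))
    (fun σ hσ τ hτ => by
      have := hHb' _ (le_max_left _ _) _ (le_max_right _ _) τ hτ σ hσ
      simp only [Function.comp, Prod.swap_prod_mk]
      linarith)
  simp_rw [← hDswap] at hK2
  have hJa : ∫ r in Ioo 0 a, g • S 1 (r + b) x =
      g • S (3 - α) a (S 1 b x) + g • S 2 a (S (2 - α) b x) - ∫ r in Ioo 0 a, D r b := by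
    have e1 := integral_op hα hT hS (S 1 b x) h2α ha
    have e2 := integral_op hα hT hS (S (2 - α) b x) one_pos ha
    have e3 := hK2.1
    have i1 : Integrable (fun r => g • S (2 - α) r (S 1 b x)) (volume.restrict (Ioo 0 a)) :=
      e1.1.smul g
    have i2 : Integrable (fun r => g • S 1 r (S (2 - α) b x)) (volume.restrict (Ioo 0 a)) :=
      e2.1.smul g
    have i3 : Integrable (fun r => g • S (2 - α) r (S 1 b x) + g • S 1 r (S (2 - α) b x))
      (volume.restrict (Ioo 0 a)) := i1.add i2
    rw [one_add_one_eq_two] at e2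
    rw [show 2 - α + 1 = 3 - α by ring] at e1
    rw [← e1.2, ← e2.2, ← integral_smul, ← integral_smul,
      ← integral_add i1 i2, ← integral_sub i3 e3]
    apply setIntegral_congr_fun measurableSet_Ioo
    intro r hr
    exact hFE r ⟨hr.1, hr.2.le.trans (le_max_left _ _)⟩ b ⟨hb, le_max_right _ _⟩
  -- The part of the kernel terms depending on `σ + τ` cancels in the difference.
  have hDD : (∫ r in Ioo 0 b, D a r) - (∫ r in Ioo 0 a, D r b) =
      g • S 1 a (S (3 - α) b x) - g • S (3 - α) a (S 1 b x) := by
    have hK1 := integral_kernel hα ha hb (hHc _ _)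
      (hHb' _ (le_max_left _ _) _ (le_max_right _ _))
    have hHi : IntegrableOn H (Ioo 0 a ×ˢ Ioo 0 b) := integrableOn_of_bound hα ha hb (hHc _ _)
      (hHb' _ (le_max_left _ _) _ (le_max_right _ _))
    have hw : ∀ u : ℝ × ℝ → ℝ, Measurable u →
        (∀ p ∈ Ioo 0 a ×ˢ Ioo 0 b, 0 ≤ u p ∧ u p ≤ a + b) →
        IntegrableOn (fun p => u p ^ (2 - α) • H p) (Ioo 0 a ×ˢ Ioo 0 b) := by
      intro u hu hub
      apply Integrable.bdd_smul hHi ((a + b) ^ (2 - α))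
      · exact (hu.pow_const _).aestronglyMeasurable
      · filter_upwards [ae_restrict_mem (measurableSet_Ioo.prod measurableSet_Ioo)] with p hp
        obtain ⟨h1, h2⟩ := hub p hp
        rw [Real.norm_of_nonneg (Real.rpow_nonneg h1 _)]
        exact Real.rpow_le_rpow h1 h2 h2α.le
    have w1 := hw (fun p => a + b - p.1 - p.2) (by fun_prop) (fun p hp =>
      ⟨by linarith [hp.1.2, hp.2.2], by linarith [hp.1.1, hp.2.1]⟩)
    have w2 := hw (fun p => a - p.1) (by fun_prop) (fun p hp =>
      ⟨by linarith [hp.1.2], by linarith [hp.1.1, hp.2.1]⟩)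
    have w3 := hw (fun p => b - p.2) (by fun_prop) (fun p hp =>
      ⟨by linarith [hp.2.2], by linarith [hp.1.1, hp.2.1]⟩)
    have hsw : (∫ r in Ioo 0 a, D r b) = ∫ p in Ioo 0 a ×ˢ Ioo 0 b,
        (((a + b - p.1 - p.2) ^ (2 - α) - (b - p.2) ^ (2 - α)) / (2 - α)) • H p := by
      rw [hK2.2, Measure.volume_eq_prod, ← setIntegral_prod_swap]
      congr 1
      ext p
      simp only [Prod.fst_swap, Prod.snd_swap, Function.comp, Prod.swap_swap]
      rw [show b + a - p.2 - p.1 = a + b - p.1 - p.2 by ring]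
    have hsplit : ∀ u v : ℝ × ℝ → ℝ,
        IntegrableOn (fun p => u p ^ (2 - α) • H p) (Ioo 0 a ×ˢ Ioo 0 b) →
        IntegrableOn (fun p => v p ^ (2 - α) • H p) (Ioo 0 a ×ˢ Ioo 0 b) →
        ∫ p in Ioo 0 a ×ˢ Ioo 0 b, ((u p ^ (2 - α) - v p ^ (2 - α)) / (2 - α)) • H p =
        (2 - α)⁻¹ • ((∫ p in Ioo 0 a ×ˢ Ioo 0 b, u p ^ (2 - α) • H p) -
          ∫ p in Ioo 0 a ×ˢ Ioo 0 b, v p ^ (2 - α) • H p) := by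
      intro u v hu hv
      rw [← integral_sub hu hv, ← integral_smul]
      congr 1
      ext p
      rw [← sub_smul, smul_smul]
      congr 1
      ring
    have hΓ : Real.Gamma (3 - α) = (2 - α) * g := by
      rw [show 3 - α = (2 - α) + 1 by ring, Real.Gamma_add_one h2α.ne']
    have t2 : ∫ p in Ioo 0 a ×ˢ Ioo 0 b, (a - p.1) ^ (2 - α) • H p =
        ((2 - α) * g) • S (3 - α) a (S 1 b x) := by
      have := iterated_eq_op hα hT hS x (β := 3 - α) (by linarith) one_pos ha hb
      simp only [sub_self, Real.rpow_zero, mul_one, Real.Gamma_one,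
        show 3 - α - 1 = 2 - α by ring] at this
      rw [← hΓ, ← this, Measure.volume_eq_prod, setIntegral_prod _ w2]
    have t3 : ∫ p in Ioo 0 a ×ˢ Ioo 0 b, (b - p.2) ^ (2 - α) • H p =
        ((2 - α) * g) • S 1 a (S (3 - α) b x) := by
      have := iterated_eq_op hα hT hS x (γ := 3 - α) one_pos (by linarith) ha hb
      simp only [sub_self, Real.rpow_zero, one_mul, Real.Gamma_one,
        show 3 - α - 1 = 2 - α by ring] at this
      rw [← hΓ, ← this, Measure.volume_eq_prod, setIntegral_prod _ w3]
    rw [hsw, hK1.2, hsplit _ _ w1 w2, hsplit _ _ w1 w3, t2, t3, ← smul_sub, sub_sub_sub_cancel_left,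
      ← smul_sub, smul_smul, ← mul_assoc, inv_mul_cancel₀ h2α.ne', one_mul, smul_sub]
  have hU : (∫ r in Ioo 0 b, g • S 1 (a + r) x) - (∫ r in Ioo 0 a, g • S 1 (r + b) x) =
      g • (S 2 b x - S 2 a x) := by
    have hi : ∀ c, 0 < c → IntervalIntegrable (fun r => S 1 r x) volume 0 c := fun c hc => by
      rw [intervalIntegrable_iff_integrableOn_Ioo_of_le hc.le]
      exact (integral_op hα hT hS x one_pos hc).1
    have h2 : ∀ c, 0 < c → S 2 c x = ∫ r in (0:ℝ)..c, S 1 r x := fun c hc => by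
      rw [← one_add_one_eq_two, ← (integral_op hα hT hS x one_pos hc).2,
        intervalIntegral.integral_of_le hc.le, integral_Ioc_eq_integral_Ioo]
    have hab := add_pos ha hb
    rw [integral_smul, integral_smul, ← integral_Ioc_eq_integral_Ioo,
      ← integral_Ioc_eq_integral_Ioo, ← intervalIntegral.integral_of_le ha.le,
      ← intervalIntegral.integral_of_le hb.le,
      intervalIntegral.integral_comp_add_left (fun r => S 1 r x),
      intervalIntegral.integral_comp_add_right (fun r => S 1 r x), h2 a ha, h2 b hb, add_zero,
      zero_add,
      ← intervalIntegral.integral_interval_sub_left (hi _ hab) (hi _ ha),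
      ← intervalIntegral.integral_interval_sub_left (hi _ hab) (hi _ hb), ← smul_sub]
    congr 1
    abel
  have : g • (S (2 - α) a (S 2 b x) - S 2 a (S (2 - α) b x)) = g • (S 2 b x - S 2 a x) := by
    rw [← hU, hJb, hJa, smul_sub]
    rw [sub_eq_iff_eq_add] at hDD
    rw [hDD]
    abel
  exact smul_right_injective X hg0.ne' this

/-! ### The key identity and the limit at zero -/

/-- The singular term contributes exactly `y`, as `J^{2-α}` maps `r^{α-2}/Γ(α-1)` to `1`. -/
lemma RLint_sub_power {X : Type*} [NormedAddCommGroup X] [NormedSpace ℝ X]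
    [CompleteSpace X] {α : ℝ} (hα : α ∈ Ioo (1:ℝ) 2) {T : ℝ → X →L[ℝ] X}
    (hT : IsRLFracCosine α T) (y : X) {s : ℝ} (hs : 0 < s) :
    RLint (2 - α) s (fun r => T r y - (r ^ (α - 2) / Real.Gamma (α - 1)) • y) =
      RLint (2 - α) s (fun r => T r y) - y := by
  have h2α : 0 < 2 - α := by linarith [hα.2]
  have h1α : 0 < α - 1 := by linarith [hα.1]
  obtain ⟨hb1, hb2⟩ := beta_Ioo h2α h1α hs
  have e : ∀ σ, (s - σ) ^ (2 - α - 1) • (T σ y - (σ ^ (α - 2) / Real.Gamma (α - 1)) • y) =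
      (s - σ) ^ (2 - α - 1) • T σ y -
      ((s - σ) ^ (2 - α - 1) * (σ - 0) ^ (α - 1 - 1)) • ((Real.Gamma (α - 1))⁻¹ • y) := by
    intro σ
    rw [smul_sub, smul_smul, smul_smul, sub_zero, show α - 1 - 1 = α - 2 by ring]
    congr 2
    ring
  rw [RLint_eq_Ioo _ hs.le, RLint_eq_Ioo _ hs.le]
  simp_rw [e]
  rw [integral_sub (hT.integrableOn hα y h2α hs) (hb1.smul_const _), integral_smul_const, hb2,
    smul_sub]
  congr 1
  rw [smul_smul, smul_smul, show 2 - α + (α - 1) = 1 by ring, Real.Gamma_one, sub_self,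
    Real.rpow_zero]
  have := (Real.Gamma_pos_of_pos h2α).ne'
  have := (Real.Gamma_pos_of_pos h1α).ne'
  convert! one_smul ℝ y using 2
  field_simp

lemma continuousOn_op {X : Type*} [NormedAddCommGroup X] [NormedSpace ℝ X]
    [CompleteSpace X] {α : ℝ} (hα : α ∈ Ioo (1:ℝ) 2) {T : ℝ → X →L[ℝ] X}
    (hT : IsRLFracCosine α T) {S : ℝ → ℝ → X →L[ℝ] X}
    (hS : ∀ β s, 0 < β → 0 < s → ∀ y, S β s y = RLint β s (fun σ => T σ y)) (x : X) :
    ContinuousOn (fun t => S α t x) (Ioi 0) := by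
  have h1α : 0 < α - 1 := by linarith [hα.1]
  intro t ht
  have ht0 : 0 < t := ht
  apply ContinuousAt.continuousWithinAt
  have h := (integral_op hα hT hS x h1α (show 0 < t + 1 by linarith)).1
  have hc : ContinuousOn (fun u => ∫ r in (0:ℝ)..u, S (α - 1) r x) (uIcc 0 (t + 1)) := by
    apply intervalIntegral.continuousOn_primitive_interval
    rwa [uIcc_of_le (by linarith), integrableOn_Icc_iff_integrableOn_Ioo]
  rw [uIcc_of_le (by linarith)] at hc
  refine (hc.continuousAt (Icc_mem_nhds ht0 (by linarith))).congr ?_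
  filter_upwards [Ioi_mem_nhds ht0] with u hu
  have := (integral_op hα hT hS x h1α hu).2
  rw [sub_add_cancel] at this
  rw [← this, intervalIntegral.integral_of_le (le_of_lt hu), integral_Ioc_eq_integral_Ioo]

/-- `(J^{2-α}T(s) - I) J^αT(t)x = J^2T(s) (T(t)x - t^{α-2}/Γ(α-1) x)`. Applying `J^{α-1}` in the
second variable to the symmetrised functional equation gives the integral of this identity over
`(0,t)`; it remains to differentiate. -/
lemma key_eq {X : Type*} [NormedAddCommGroup X] [NormedSpace ℝ X]
    [CompleteSpace X] {α : ℝ} (hα : α ∈ Ioo (1:ℝ) 2) {T : ℝ → X →L[ℝ] X}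
    (hT : IsRLFracCosine α T) {S : ℝ → ℝ → X →L[ℝ] X}
    (hS : ∀ β s, 0 < β → 0 < s → ∀ y, S β s y = RLint β s (fun σ => T σ y)) (x : X)
    {s t : ℝ} (hs : 0 < s) (ht : 0 < t) :
    S (2 - α) s (S α t x) - S α t x =
      S 2 s (T t x - (t ^ (α - 2) / Real.Gamma (α - 1)) • x) := by
  have h2α : 0 < 2 - α := by linarith [hα.2]
  have h1α : 0 < α - 1 := by linarith [hα.1]
  have hα0 : 0 < α := by linarith
  set B : X →L[ℝ] X := S (2 - α) s - ContinuousLinearMap.id ℝ X with hB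
  set C : X →L[ℝ] X := S 2 s with hC
  set h : ℝ → X := fun r => T r x - (r ^ (α - 2) / Real.Gamma (α - 1)) • x with hh
  have hhi : ∀ u, 0 < u → IntegrableOn h (Ioo 0 u) := by
    intro u hu
    refine (hT.integrableOn' hα x hu).sub ?_
    have := (integrableOn_rpow_Ioo h1α hu).div_const (Real.Gamma (α - 1))
    rw [show α - 1 - 1 = α - 2 by ring] at this
    exact this.smul_const x
  have hsym : ∀ r, 0 < r → B (S 2 r x) = C (RLint (2 - α) r h) := by
    intro r hr
    have := symm_eq hα hT hS x hs hr
    rw [hh, RLint_sub_power hα hT x hr, ← hS _ _ h2α hr, map_sub]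
    simp only [hB, sub_apply, ContinuousLinearMap.id_apply]
    rw [sub_eq_iff_eq_add] at this
    rw [this]
    abel
  have hInteg : ∀ u, 0 < u → B (∫ r in Ioo 0 u, S α r x) = C (∫ r in Ioo 0 u, h r) := by
    intro u hu
    have s1 := RLint_semigroup h1α two_pos (by linarith) hu (hT.integrableOn' hα x hu)
    have s2 := RLint_semigroup h1α h2α (by linarith) hu (hhi u hu)
    have e1 : S (α + 1) u x = RLint (α - 1) u (fun r => RLint 2 r (fun σ => T σ x)) := by
      rw [s1.2, hS _ _ (by linarith) hu]
      congr 1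
      ring
    have e2 : RLint 1 u h = RLint (α - 1) u (fun r => RLint (2 - α) r h) := by
      rw [s2.2]
      congr 1
      ring
    rw [(integral_op hα hT hS x hα0 hu).2, e1, ← RLint_one hu.le, e2, map_RLint B hu.le s1.1,
      map_RLint C hu.le s2.1, RLint_eq_Ioo _ hu.le, RLint_eq_Ioo _ hu.le]
    congr 1
    apply setIntegral_congr_fun measurableSet_Ioo
    intro r hr
    simp only
    rw [← hS 2 r two_pos hr.1, hsym r hr.1]
  set Φ : ℝ → X := fun r => B (S α r x) - C (h r) with hΦ
  have hΦi : ∀ u, 0 < u → IntegrableOn Φ (Ioo 0 u) := fun u hu =>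
    (B.integrable_comp (integral_op hα hT hS x hα0 hu).1).sub (C.integrable_comp (hhi u hu))
  have hΦ0 : ∀ u, 0 < u → ∫ r in (0:ℝ)..u, Φ r = 0 := by
    intro u hu
    rw [intervalIntegral.integral_of_le hu.le, integral_Ioc_eq_integral_Ioo,
      integral_sub (B.integrable_comp (integral_op hα hT hS x hα0 hu).1)
        (C.integrable_comp (hhi u hu)), B.integral_comp_comm (integral_op hα hT hS x hα0 hu).1,
      C.integral_comp_comm (hhi u hu), hInteg u hu, sub_self]
  have hΦc : ContinuousOn Φ (Ioi 0) := by
    refine (B.continuous.comp_continuousOn (continuousOn_op hα hT hS x)).sub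
      (C.continuous.comp_continuousOn ((hT.1 x).sub ?_))
    refine ContinuousOn.smul (ContinuousOn.div_const ?_ _) continuousOn_const
    exact fun r hr => (Real.continuousAt_rpow_const r _ (Or.inl (ne_of_gt hr))).continuousWithinAt
  have hd : HasDerivAt (fun u => ∫ r in (0:ℝ)..u, Φ r) (Φ t) t := by
    apply intervalIntegral.integral_hasDerivAt_right
    · rw [intervalIntegrable_iff_integrableOn_Ioo_of_le ht.le]
      exact hΦi t ht
    · exact hΦc.stronglyMeasurableAtFilter isOpen_Ioi t ht
    · exact hΦc.continuousAt (Ioi_mem_nhds ht)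
  have hd0 : HasDerivAt (fun u => ∫ r in (0:ℝ)..u, Φ r) 0 t := by
    refine (hasDerivAt_const t (0:X)).congr_of_eventuallyEq ?_
    filter_upwards [Ioi_mem_nhds ht] with u hu using hΦ0 u hu
  have := hd.unique hd0
  simp only [hΦ, sub_eq_zero] at this
  rw [← this]
  simp [hB]

/-- `Γ(α+1) s^{-α} J^2T(s)y → y` as `s → 0+`. -/
lemma tendsto_J2 {X : Type*} [NormedAddCommGroup X] [NormedSpace ℝ X]
    [CompleteSpace X] {α : ℝ} (hα : α ∈ Ioo (1:ℝ) 2) {T : ℝ → X →L[ℝ] X}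
    (hT : IsRLFracCosine α T) (y : X) :
    Tendsto (fun s : ℝ => (Real.Gamma (α + 1) * s ^ (-α)) • RLint 2 s (fun σ => T σ y))
      (𝓝[>] 0) (𝓝 y) := by
  have h1α : 0 < α - 1 := by linarith [hα.1]
  have hα0 : 0 < α := by linarith
  have hΓ1 := Real.Gamma_pos_of_pos h1α
  have hΓ2 := Real.Gamma_pos_of_pos (show 0 < α + 1 by linarith)
  rw [Metric.tendsto_nhds]
  intro ε hε
  set L := (Real.Gamma (α - 1))⁻¹ • y with hL
  set η := ε / (2 * Real.Gamma (α - 1)) with hη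
  have hη0 : 0 < η := by positivity
  have hev := (Metric.tendsto_nhds.1 (hT.2.1 y)) η hη0
  obtain ⟨δ, hδ, hδb⟩ := mem_nhdsGT_iff_exists_Ioo_subset.1 hev
  filter_upwards [Ioo_mem_nhdsGT (show (0:ℝ) < δ from hδ)] with s hs
  obtain ⟨hb1, hb2⟩ := beta_Ioo two_pos h1α hs.1
  rw [show 2 + (α - 1) = α + 1 by ring, Real.Gamma_two, one_mul, sub_zero,
    show α + 1 - 1 = α by ring] at hb2
  have hsα : s ^ (-α) * s ^ α = 1 := by
    rw [← Real.rpow_add hs.1, neg_add_cancel, Real.rpow_zero]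
  have hp := Real.rpow_pos_of_pos hs.1 (-α)
  have hTi := hT.integrableOn hα y two_pos hs.1
  have hy : y = (Real.Gamma (α + 1) * s ^ (-α)) •
      ∫ σ in Ioo 0 s, ((s - σ) ^ ((2:ℝ) - 1) * (σ - 0) ^ (α - 1 - 1)) • L := by
    rw [integral_smul_const, hb2, hL, smul_smul, smul_smul]
    conv_lhs => rw [← one_smul ℝ y]
    congr 1
    have e : Real.Gamma (α + 1) * s ^ (-α) * (Real.Gamma (α - 1) / Real.Gamma (α + 1) * s ^ α) *
        (Real.Gamma (α - 1))⁻¹ = s ^ (-α) * s ^ α := by field_simp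
    exact (e.trans hsα).symm
  rw [RLint_eq_Ioo _ hs.1.le, Real.Gamma_two, inv_one, one_smul, dist_eq_norm]
  nth_rewrite 2 [hy]
  rw [← smul_sub, ← integral_sub hTi (hb1.smul_const L), norm_smul,
    Real.norm_of_nonneg (by positivity)]
  have hbd : ‖∫ σ in Ioo 0 s, ((s - σ) ^ ((2:ℝ) - 1) • T σ y -
      ((s - σ) ^ ((2:ℝ) - 1) * (σ - 0) ^ (α - 1 - 1)) • L)‖ ≤
      ∫ σ in Ioo 0 s, η * ((s - σ) ^ ((2:ℝ) - 1) * (σ - 0) ^ (α - 1 - 1)) := by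
    apply norm_integral_le_of_norm_le (hb1.const_mul η)
    filter_upwards [ae_restrict_mem measurableSet_Ioo] with σ hσ
    have hσb : dist (σ ^ (2 - α) • T σ y) L < η := hδb ⟨hσ.1, hσ.2.trans hs.2⟩
    have hq : 0 ≤ (s - σ) ^ ((2:ℝ) - 1) * (σ - 0) ^ (α - 1 - 1) :=
      mul_nonneg (Real.rpow_nonneg (by linarith [hσ.2]) _) (Real.rpow_nonneg (by linarith [hσ.1]) _)
    have e : (s - σ) ^ ((2:ℝ) - 1) • T σ y =
        ((s - σ) ^ ((2:ℝ) - 1) * (σ - 0) ^ (α - 1 - 1)) • (σ ^ (2 - α) • T σ y) := by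
      rw [smul_smul, mul_assoc, sub_zero, ← Real.rpow_add hσ.1,
        show α - 1 - 1 + (2 - α) = 0 by ring, Real.rpow_zero, mul_one]
    rw [e, ← smul_sub, norm_smul, Real.norm_of_nonneg hq, mul_comm]
    rw [dist_eq_norm] at hσb
    exact mul_le_mul_of_nonneg_right hσb.le hq
  rw [integral_const_mul, hb2] at hbd
  calc _ ≤ Real.Gamma (α + 1) * s ^ (-α) *
        (η * (Real.Gamma (α - 1) / Real.Gamma (α + 1) * s ^ α)) := by gcongr
    _ = (s ^ (-α) * s ^ α) * (ε / 2) := by rw [hη]; field_simp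
    _ < ε := by rw [hsα]; linarith

/-- For every `x ∈ X` and `t > 0`, `J_t^α T(t)x ∈ D(A)` and
`T(t)x = (t^{α-2}/Γ(α-1)) x + A (J_t^α T(t)x)`. -/
theorem rl_frac_cosine_integral_in_domain
    {X : Type*} [NormedAddCommGroup X] [NormedSpace ℝ X] [CompleteSpace X]
    (α : ℝ) (hα : α ∈ Set.Ioo (1:ℝ) 2) (T : ℝ → X →L[ℝ] X)
    (hT : IsRLFracCosine α T) :
    ∀ x : X, ∀ t > (0:ℝ),
      GenLimit α T (RLint α t (fun σ => T σ x))
        (T t x - (t ^ (α - 2) / Real.Gamma (α - 1)) • x) := by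
  intro x t ht
  have h2α : 0 < 2 - α := by linarith [hα.2]
  have hex : ∀ β s : ℝ, ∃ S : X →L[ℝ] X, 0 < β → 0 < s →
      ∀ y, S y = RLint β s (fun σ => T σ y) := by
    intro β s
    by_cases h : 0 < β ∧ 0 < s
    · obtain ⟨S, hS⟩ := hT.exists_op hα h.1 h.2
      exact ⟨S, fun _ _ => hS⟩
    · exact ⟨0, fun h1 h2 => absurd ⟨h1, h2⟩ h⟩
  choose S hS using hex
  refine (tendsto_J2 hα hT (T t x - (t ^ (α - 2) / Real.Gamma (α - 1)) • x)).congr' ?_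
  filter_upwards [self_mem_nhdsWithin] with s hs
  rw [RLint_sub_power hα hT _ hs, ← hS _ _ h2α hs, ← hS _ _ (by linarith [hα.1]) ht,
    key_eq hα hT hS x hs ht, hS 2 s two_pos hs]
end

section
/- Let α ∈ (1,2), let X be a real Banach space, let {T(t)}_{t>0} be a Riemann-Liouville α-order fractional cosine function on X, and let A be its generator. Then for every x ∈ D(A) and every t > 0, T(t)x = (t^{α-2}/Γ(α-1)) x + J_t^α T(t)Ax. -/
/-!
Notation: `g_a(t) = t^{a-1}/Γ(a)`, so that `J^a f = g_a * f`, and `Q(s) = J_s^{2-α}(T(s)x − g_{α-1}(s)x)`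
is the quantity with `Γ(α+1) s^{-α} Q(s) → Ax`. Since `J^{2-α} g_{α-1} = 1`, one has
`J^{2-α} T(s)x = x + Q(s)` (`defect_eq`).

Apply `J^{α-1}` in `t` to the functional equation. By the semigroup law `J^a J^b = J^{a+b}`, the first
two terms on the right become `∫_0^t T(σ) J^1T(s)x dσ` and `J_t^α T(t)(x + Q(s))`. In the third term the
inner function of `h = t - σ` is the tail `J^{2-α}(1_{(0,s)} T(·)x)(h + s)`; its `J^{α-1}` is computed
from `J^{α-1} J^{2-α} = J^1` for the truncated function `1_{(0,s)} T(·)x` by splitting the outer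
integral at `s` (`rl_tail`, `tail_eq`). The terms with `J^1 T(s)x` cancel and what remains is the
exact identity (`key_identity`)

  `∫_t^{t+s} g_α(t+s-σ) T(σ)x dσ − ∫_0^s g_{α-1}(t+s-r) J^1T(r)x dr`
    `= J_t^α T(t)Q(s) + ∫_0^t T(σ) E_s(t-σ) dσ`,

where `E_s(h) = ∫_0^s g_{α-1}(h+s-p) Q(p) dp`. Multiply by `Γ(α+1) s^{-α}` and let `s → 0+`. The two
integrals on the left are weighted averages over intervals of length `s` and tend to `T(t)x` and, as
`J^1T(r)x ~ g_α(r)x`, to `g_{α-1}(t)x`. On the right, `z ↦ J_t^α T(t)z` is a bounded operator, so the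
first term tends to `J_t^α T(t)Ax`; since `Q(p) = O(p^α)`, the last integral is `O(s^{α+1})` and
disappears.

All integrability and interchange statements rest on the bound `‖T(σ)‖ ≤ M σ^{α-2}` on `(0, b]`
(`family_bound`, by uniform boundedness) and on Beta integrals.
-/

open MeasureTheory Filter Topology Set

/-! ### Beta integrals and Fubini on a triangle -/

/-- Euler's Beta integral, scaled to `(0, t)`. -/
lemma beta_value {a b t : ℝ} (ha : 0 < a) (hb : 0 < b) (ht : 0 < t) :
    ∫ σ in (0:ℝ)..t, (t - σ) ^ (a - 1) * σ ^ (b - 1) =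
      t ^ (a + b - 1) * (Real.Gamma a * Real.Gamma b / Real.Gamma (a + b)) := by
  have h1 := Complex.betaIntegral_scaled (b : ℂ) (a : ℂ) ht
  rw [Complex.betaIntegral_eq_Gamma_mul_div _ _ (by simpa) (by simpa)] at h1
  have h2 : ∫ σ in (0:ℝ)..t, (σ : ℂ) ^ ((b : ℂ) - 1) * ((t : ℂ) - σ) ^ ((a : ℂ) - 1) =
      ((∫ σ in (0:ℝ)..t, (t - σ) ^ (a - 1) * σ ^ (b - 1) : ℝ) : ℂ) := by
    rw [← intervalIntegral.integral_ofReal]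
    refine intervalIntegral.integral_congr fun σ hσ => ?_
    rw [uIcc_of_le ht.le] at hσ
    push_cast
    rw [Complex.ofReal_cpow (by linarith [hσ.2]), Complex.ofReal_cpow hσ.1]
    push_cast
    ring
  rw [h2] at h1
  have h3 : (b : ℂ) + a - 1 = ((a + b - 1 : ℝ) : ℂ) := by push_cast; ring
  rw [h3, ← Complex.ofReal_cpow ht.le, Complex.Gamma_ofReal, Complex.Gamma_ofReal,
    ← Complex.ofReal_add, Complex.Gamma_ofReal] at h1
  rw [add_comm b a, mul_comm (Real.Gamma b : ℂ)] at h1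
  exact_mod_cast h1

/-- Integrability follows from the value of the integral, which would be `0` otherwise. -/
lemma beta_integrable {a b t : ℝ} (ha : 0 < a) (hb : 0 < b) (ht : 0 < t) :
    IntervalIntegrable (fun σ => (t - σ) ^ (a - 1) * σ ^ (b - 1)) volume 0 t := by
  by_contra h
  have h1 := beta_value ha hb ht
  rw [intervalIntegral.integral_undef h] at h1
  have : 0 < t ^ (a + b - 1) * (Real.Gamma a * Real.Gamma b / Real.Gamma (a + b)) := by
    have := Real.Gamma_pos_of_pos ha
    have := Real.Gamma_pos_of_pos hb
    have := Real.Gamma_pos_of_pos (add_pos ha hb)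
    positivity
  linarith

lemma beta_integrableOn {a b t : ℝ} (ha : 0 < a) (hb : 0 < b) (ht : 0 < t) :
    IntegrableOn (fun σ => (t - σ) ^ (a - 1) * σ ^ (b - 1)) (Ioo 0 t) := by
  have := beta_integrable ha hb ht
  rwa [intervalIntegrable_iff_integrableOn_Ioo_of_le ht.le] at this

/-- The Dirichlet-type majorant on the triangle `0 < σ < r < t` is integrable. -/
lemma triangle_bound_integrable {a b c t : ℝ} (ha : 0 < a) (hb : 0 < b) (hc : 0 < c) :
    Integrable (indicator {p : ℝ × ℝ | p.2 < p.1}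
        (fun p => (t - p.1) ^ (a - 1) * ((p.1 - p.2) ^ (b - 1) * p.2 ^ (c - 1))))
      ((volume.restrict (Ioo 0 t)).prod (volume.restrict (Ioo 0 t))) := by
  have hS : MeasurableSet {p : ℝ × ℝ | p.2 < p.1} := measurableSet_lt measurable_snd measurable_fst
  have hm : Measurable (indicator {p : ℝ × ℝ | p.2 < p.1}
        (fun p => (t - p.1) ^ (a - 1) * ((p.1 - p.2) ^ (b - 1) * p.2 ^ (c - 1)))) :=
    Measurable.indicator (by fun_prop) hS
  have hind : ∀ r σ : ℝ, indicator {p : ℝ × ℝ | p.2 < p.1}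
        (fun p => (t - p.1) ^ (a - 1) * ((p.1 - p.2) ^ (b - 1) * p.2 ^ (c - 1))) (r, σ) =
      (t - r) ^ (a - 1) * indicator (Iio r) (fun σ => (r - σ) ^ (b - 1) * σ ^ (c - 1)) σ := by
    intro r σ
    by_cases h : σ < r <;> simp [indicator, h]
  have hset : ∀ r ∈ Ioo 0 t, Iio r ∩ Ioo 0 t = Ioo 0 r := by
    intro r hr; ext σ; simp only [mem_inter_iff, mem_Iio, mem_Ioo]
    constructor
    · rintro ⟨h1, h2, h3⟩; exact ⟨h2, h1⟩
    · rintro ⟨h1, h2⟩; exact ⟨h2, h1, h2.trans hr.2⟩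
  rw [integrable_prod_iff hm.aestronglyMeasurable]
  constructor
  · refine ae_restrict_of_forall_mem measurableSet_Ioo fun r hr => ?_
    simp only [hind]
    refine Integrable.const_mul ?_ _
    rw [integrable_indicator_iff measurableSet_Iio, IntegrableOn,
      Measure.restrict_restrict measurableSet_Iio, hset r hr]
    exact beta_integrableOn hb hc hr.1
  · by_cases ht : 0 < t
    swap
    · simp [Ioo_eq_empty ht]
    have key := (beta_integrableOn ha (add_pos hb hc) ht).mul_const
      (Real.Gamma b * Real.Gamma c / Real.Gamma (b + c))
    refine key.congr ?_
    refine ae_restrict_of_forall_mem measurableSet_Ioo fun r hr => ?_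
    have h0 : ∀ σ ∈ Ioo 0 t, ‖indicator {p : ℝ × ℝ | p.2 < p.1}
        (fun p => (t - p.1) ^ (a - 1) * ((p.1 - p.2) ^ (b - 1) * p.2 ^ (c - 1))) (r, σ)‖ =
        (t - r) ^ (a - 1) * indicator (Iio r) (fun σ => (r - σ) ^ (b - 1) * σ ^ (c - 1)) σ := by
      intro σ hσ
      rw [hind, Real.norm_of_nonneg]
      refine mul_nonneg (Real.rpow_nonneg (by linarith [hr.2]) _) ?_
      refine indicator_apply_nonneg fun h => ?_
      exact mul_nonneg (Real.rpow_nonneg (by linarith [mem_Iio.1 h]) _)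
        (Real.rpow_nonneg hσ.1.le _)
    simp only
    rw [setIntegral_congr_fun measurableSet_Ioo h0, integral_const_mul,
      integral_indicator measurableSet_Iio, Measure.restrict_restrict measurableSet_Iio, hset r hr,
      ← integral_Ioc_eq_integral_Ioo, ← intervalIntegral.integral_of_le hr.1.le,
      beta_value hb hc hr.1]
    ring

/-- Fubini on the triangle `0 < σ < r < t`, for integrands dominated by a product of integrable
power singularities at `r = t`, `r = σ` and `σ = 0`. -/
lemma triangle_swap {X : Type*} [NormedAddCommGroup X] [NormedSpace ℝ X]
    {a b c t C : ℝ} (ha : 0 < a) (hb : 0 < b) (hc : 0 < c) (ht : 0 < t) (F : ℝ → ℝ → X)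
    (hm : AEStronglyMeasurable (Function.uncurry F)
      (((volume.restrict (Ioo 0 t)).prod (volume.restrict (Ioo 0 t))).restrict
        {p : ℝ × ℝ | p.2 < p.1}))
    (hF : ∀ r σ, 0 < σ → σ < r → r < t →
      ‖F r σ‖ ≤ C * ((t - r) ^ (a - 1) * ((r - σ) ^ (b - 1) * σ ^ (c - 1)))) :
    IntervalIntegrable (fun r => ∫ σ in (0:ℝ)..r, F r σ) volume 0 t ∧
    IntervalIntegrable (fun σ => ∫ r in σ..t, F r σ) volume 0 t ∧
    ∫ r in (0:ℝ)..t, ∫ σ in (0:ℝ)..r, F r σ = ∫ σ in (0:ℝ)..t, ∫ r in σ..t, F r σ := by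
  have hS : MeasurableSet {p : ℝ × ℝ | p.2 < p.1} := measurableSet_lt measurable_snd measurable_fst
  have hint : Integrable (Function.uncurry fun r σ =>
      indicator {p : ℝ × ℝ | p.2 < p.1} (Function.uncurry F) (r, σ))
      ((volume.restrict (Ioo 0 t)).prod (volume.restrict (Ioo 0 t))) := by
    refine ((triangle_bound_integrable (t := t) ha hb hc).const_mul C).mono'
      ((aestronglyMeasurable_indicator_iff hS).2 hm) ?_
    rw [Measure.prod_restrict]
    refine ae_restrict_of_forall_mem (measurableSet_Ioo.prod measurableSet_Ioo) ?_
    rintro ⟨r, σ⟩ ⟨hr, hσ⟩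
    by_cases h : σ < r
    · simpa [Function.uncurry, indicator, h] using hF r σ hσ.1 h hr.2
    · simp [Function.uncurry, indicator, h]
  have e1 : ∀ r ∈ Ioo 0 t, ∫ σ in (0:ℝ)..r, F r σ = ∫ σ in Ioo 0 t,
      indicator {p : ℝ × ℝ | p.2 < p.1} (Function.uncurry F) (r, σ) := by
    intro r hr
    have : ∀ σ, indicator {p : ℝ × ℝ | p.2 < p.1} (Function.uncurry F) (r, σ) =
        indicator (Iio r) (F r) σ := by
      intro σ; by_cases h : σ < r <;> simp [indicator, h]
    have hset : Iio r ∩ Ioo 0 t = Ioo 0 r := by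
      ext σ; simp only [mem_inter_iff, mem_Iio, mem_Ioo]
      constructor
      · rintro ⟨h1, h2, h3⟩; exact ⟨h2, h1⟩
      · rintro ⟨h1, h2⟩; exact ⟨h2, h1, h2.trans hr.2⟩
    simp only [this]
    rw [integral_indicator measurableSet_Iio, Measure.restrict_restrict measurableSet_Iio, hset,
      ← integral_Ioc_eq_integral_Ioo, ← intervalIntegral.integral_of_le hr.1.le]
  have e2 : ∀ σ ∈ Ioo 0 t, ∫ r in σ..t, F r σ = ∫ r in Ioo 0 t,
      indicator {p : ℝ × ℝ | p.2 < p.1} (Function.uncurry F) (r, σ) := by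
    intro σ hσ
    have : ∀ r, indicator {p : ℝ × ℝ | p.2 < p.1} (Function.uncurry F) (r, σ) =
        indicator (Ioi σ) (fun r => F r σ) r := by
      intro r; by_cases h : σ < r <;> simp [indicator, h]
    have hset : Ioi σ ∩ Ioo 0 t = Ioo σ t := by
      ext r; simp only [mem_inter_iff, mem_Ioi, mem_Ioo]
      constructor
      · rintro ⟨h1, h2, h3⟩; exact ⟨h1, h3⟩
      · rintro ⟨h1, h2⟩; exact ⟨h1, hσ.1.trans h1, h2⟩
    simp only [this]
    rw [integral_indicator measurableSet_Ioi, Measure.restrict_restrict measurableSet_Ioi, hset,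
      ← integral_Ioc_eq_integral_Ioo, ← intervalIntegral.integral_of_le hσ.2.le]
  refine ⟨?_, ?_, ?_⟩
  · rw [intervalIntegrable_iff_integrableOn_Ioo_of_le ht.le]
    exact hint.integral_prod_left.congr
      (ae_restrict_of_forall_mem measurableSet_Ioo fun r hr => (e1 r hr).symm)
  · rw [intervalIntegrable_iff_integrableOn_Ioo_of_le ht.le]
    exact hint.integral_prod_right.congr
      (ae_restrict_of_forall_mem measurableSet_Ioo fun r hr => (e2 r hr).symm)
  · rw [intervalIntegral.integral_of_le ht.le, intervalIntegral.integral_of_le ht.le,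
      integral_Ioc_eq_integral_Ioo, integral_Ioc_eq_integral_Ioo,
      setIntegral_congr_fun measurableSet_Ioo e1, setIntegral_congr_fun measurableSet_Ioo e2]
    exact integral_integral_swap hint

/-! ### Riemann-Liouville integrals of functions with a power singularity -/

section RL

variable {X : Type*} [NormedAddCommGroup X] [NormedSpace ℝ X]

lemma integral_congr_Ioo_of_le {a b : ℝ} (hab : a ≤ b) {f g : ℝ → X}
    (h : ∀ σ ∈ Ioo a b, f σ = g σ) : ∫ σ in a..b, f σ = ∫ σ in a..b, g σ := by
  rw [intervalIntegral.integral_of_le hab, intervalIntegral.integral_of_le hab,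
    integral_Ioc_eq_integral_Ioo, integral_Ioc_eq_integral_Ioo]
  exact setIntegral_congr_fun measurableSet_Ioo h

lemma rl_integrable {a c t C : ℝ} (ha : 0 < a) (hc : 0 < c) (ht : 0 < t) {f : ℝ → X}
    (hf : AEStronglyMeasurable f (volume.restrict (Ioo 0 t)))
    (hb : ∀ σ ∈ Ioo 0 t, ‖f σ‖ ≤ C * σ ^ (c - 1)) :
    IntervalIntegrable (fun σ => (t - σ) ^ (a - 1) • f σ) volume 0 t := by
  rw [intervalIntegrable_iff_integrableOn_Ioo_of_le ht.le]
  refine ((beta_integrableOn ha hc ht).const_mul C).mono' ?_ ?_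
  · exact (Measurable.aestronglyMeasurable (by fun_prop)).smul hf
  · refine ae_restrict_of_forall_mem measurableSet_Ioo fun σ hσ => ?_
    have h1 : 0 ≤ (t - σ) ^ (a - 1) := Real.rpow_nonneg (by linarith [hσ.2]) _
    rw [norm_smul, Real.norm_of_nonneg h1]
    calc _ ≤ (t - σ) ^ (a - 1) * (C * σ ^ (c - 1)) := mul_le_mul_of_nonneg_left (hb σ hσ) h1
      _ = _ := by ring

/-- `J^a J^b = J^{a+b}` on functions with at most a power singularity at `0`. -/
lemma rl_semigroup [CompleteSpace X] {a b c t C : ℝ} (ha : 0 < a) (hb : 0 < b) (hc : 0 < c)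
    (ht : 0 < t) {f : ℝ → X}
    (hf : AEStronglyMeasurable f (volume.restrict (Ioo 0 t)))
    (hbd : ∀ σ ∈ Ioo 0 t, ‖f σ‖ ≤ C * σ ^ (c - 1)) :
    IntervalIntegrable (fun r => (t - r) ^ (a - 1) • RLint b r f) volume 0 t ∧
      RLint a t (fun r => RLint b r f) = RLint (a + b) t f := by
  have hΓa := (Real.Gamma_pos_of_pos ha).ne'
  have hΓb := (Real.Gamma_pos_of_pos hb).ne'
  have H := triangle_swap (a := a) (b := b) (c := c) (C := C) ha hb hc ht
    (fun r σ => (t - r) ^ (a - 1) • (r - σ) ^ (b - 1) • f σ) ?_ ?_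
  · obtain ⟨hi, -, hsw⟩ := H
    have h1 : ∀ σ ∈ Ioo 0 t, ∫ r in σ..t, (t - r) ^ (a - 1) • (r - σ) ^ (b - 1) • f σ =
        (Real.Gamma a * Real.Gamma b / Real.Gamma (a + b)) • (t - σ) ^ (a + b - 1) • f σ := by
      intro σ hσ
      simp only [smul_smul]
      rw [intervalIntegral.integral_smul_const]
      congr 1
      have h2 := intervalIntegral.integral_comp_add_right (a := 0) (b := t - σ)
        (fun r => (t - r) ^ (a - 1) * (r - σ) ^ (b - 1)) σ
      rw [zero_add, sub_add_cancel] at h2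
      rw [← h2, mul_comm (_ / _), ← beta_value ha hb (sub_pos.2 hσ.2)]
      refine intervalIntegral.integral_congr fun r _ => ?_
      ring_nf
    unfold RLint
    have h3 : ∀ r, (t - r) ^ (a - 1) • (Real.Gamma b)⁻¹ •
        (∫ σ in (0:ℝ)..r, (r - σ) ^ (b - 1) • f σ) = (Real.Gamma b)⁻¹ •
        ∫ σ in (0:ℝ)..r, (t - r) ^ (a - 1) • (r - σ) ^ (b - 1) • f σ := by
      intro r
      rw [intervalIntegral.integral_smul, smul_comm]
    simp only [h3]
    refine ⟨⟨hi.1.smul _, hi.2.smul _⟩, ?_⟩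
    rw [intervalIntegral.integral_smul, hsw,
      integral_congr_Ioo_of_le ht.le h1, intervalIntegral.integral_smul, smul_smul, smul_smul]
    congr 1
    field_simp
  · refine AEStronglyMeasurable.restrict ?_
    refine AEStronglyMeasurable.smul (Measurable.aestronglyMeasurable (by fun_prop)) ?_
    exact (Measurable.aestronglyMeasurable (by fun_prop)).smul hf.comp_snd
  · intro r σ h1 h2 h3
    have e1 : 0 ≤ (t - r) ^ (a - 1) := Real.rpow_nonneg (by linarith) _
    have e2 : 0 ≤ (r - σ) ^ (b - 1) := Real.rpow_nonneg (by linarith) _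
    rw [norm_smul, norm_smul, Real.norm_of_nonneg e1, Real.norm_of_nonneg e2]
    calc _ ≤ (t - r) ^ (a - 1) * ((r - σ) ^ (b - 1) * (C * σ ^ (c - 1))) := by
          gcongr; exact hbd σ ⟨h1, h2.trans h3⟩
      _ = _ := by ring

/-- Averages over `(0, s)` against the probability density `γ s^{-γ} r^{γ-1}` converge, as `s → 0+`,
to the limit of the averaged function, which may depend on both `s - r` and `r`. -/
lemma average_tendsto [CompleteSpace X] {γ : ℝ} (hγ : 0 < γ) (G : ℝ → ℝ → X) (v : X)
    (hG : Tendsto (Function.uncurry G) (𝓝[≥] (0:ℝ) ×ˢ 𝓝[>] (0:ℝ)) (𝓝 v))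
    (hint : ∀ᶠ s in 𝓝[>] (0:ℝ),
      IntervalIntegrable (fun r => r ^ (γ - 1) • G (s - r) r) volume 0 s) :
    Tendsto (fun s : ℝ => (γ * s ^ (-γ)) • ∫ r in (0:ℝ)..s, r ^ (γ - 1) • G (s - r) r)
      (𝓝[>] (0:ℝ)) (𝓝 v) := by
  rw [Metric.tendsto_nhds]
  intro ε hε
  have h1 := (Metric.tendsto_nhds.1 hG) (ε / 2) (by positivity)
  rw [eventually_prod_iff] at h1
  obtain ⟨pa, hpa, pb, hpb, hab⟩ := h1
  obtain ⟨δ₁, hδ₁, h₁⟩ := mem_nhdsGE_iff_exists_Ico_subset.1 hpa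
  obtain ⟨δ₂, hδ₂, h₂⟩ := mem_nhdsGT_iff_exists_Ioo_subset.1 hpb
  filter_upwards [hint, Ioo_mem_nhdsGT (show (0:ℝ) < min δ₁ δ₂ from lt_min hδ₁ hδ₂)] with s hs1 hs
  have hs0 : 0 < s := hs.1
  have hval : ∫ r in (0:ℝ)..s, r ^ (γ - 1) = s ^ γ / γ := by
    rw [integral_rpow (Or.inl (by linarith))]
    simp [Real.zero_rpow hγ.ne']
  have hri : IntervalIntegrable (fun r : ℝ => r ^ (γ - 1)) volume 0 s :=
    intervalIntegral.intervalIntegrable_rpow' (by linarith)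
  have hv : v = (γ * s ^ (-γ)) • ∫ r in (0:ℝ)..s, r ^ (γ - 1) • v := by
    rw [intervalIntegral.integral_smul_const, hval, smul_smul, Real.rpow_neg hs0.le]
    have : s ^ γ ≠ 0 := (Real.rpow_pos_of_pos hs0 _).ne'
    rw [show γ * (s ^ γ)⁻¹ * (s ^ γ / γ) = 1 by field_simp, one_smul]
  have hd : ‖∫ r in (0:ℝ)..s, (r ^ (γ - 1) • G (s - r) r - r ^ (γ - 1) • v)‖ ≤
      ∫ r in (0:ℝ)..s, r ^ (γ - 1) * (ε / 2) := by
    refine intervalIntegral.norm_integral_le_of_norm_le hs0.le ?_ (hri.mul_const _)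
    filter_upwards with r hr
    have hr0 : 0 ≤ r ^ (γ - 1) := Real.rpow_nonneg hr.1.le _
    rw [← smul_sub, norm_smul, Real.norm_of_nonneg hr0]
    refine mul_le_mul_of_nonneg_left ?_ hr0
    have := hab (x := s - r) (h₁ ⟨by linarith [hr.2], by linarith [hr.1, hs.2, min_le_left δ₁ δ₂]⟩)
      (y := r) (h₂ ⟨hr.1, by linarith [hr.2, hs.2, min_le_right δ₁ δ₂]⟩)
    rw [dist_eq_norm] at this
    exact this.le
  rw [dist_eq_norm]
  have hsub : ((γ * s ^ (-γ)) • ∫ r in (0:ℝ)..s, r ^ (γ - 1) • G (s - r) r) - v =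
      (γ * s ^ (-γ)) • ((∫ r in (0:ℝ)..s, r ^ (γ - 1) • G (s - r) r) -
        ∫ r in (0:ℝ)..s, r ^ (γ - 1) • v) := by
    rw [smul_sub, ← hv]
  have hrv : IntervalIntegrable (fun r : ℝ => r ^ (γ - 1) • v) volume 0 s :=
    ⟨hri.1.smul_const v, hri.2.smul_const v⟩
  rw [hsub, ← intervalIntegral.integral_sub hs1 hrv, norm_smul]
  have hp : 0 < γ * s ^ (-γ) := mul_pos hγ (Real.rpow_pos_of_pos hs0 _)
  rw [Real.norm_of_nonneg hp.le]
  calc _ ≤ γ * s ^ (-γ) * ∫ r in (0:ℝ)..s, r ^ (γ - 1) * (ε / 2) :=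
        mul_le_mul_of_nonneg_left hd hp.le
    _ = ε / 2 := by
      rw [intervalIntegral.integral_mul_const, hval, Real.rpow_neg hs0.le]
      have : s ^ γ ≠ 0 := (Real.rpow_pos_of_pos hs0 _).ne'
      field_simp
    _ < ε := by linarith

lemma kernel_continuousOn {γ s : ℝ} (hγ : γ ≤ 0) (hs : 0 < s) {w : ℝ → X}
    (hw : IntervalIntegrable w volume 0 s) :
    ContinuousOn (fun h : ℝ => ∫ p in (0:ℝ)..s, (h + s - p) ^ γ • w p) (Ioi 0) := by
  intro h₀ hh₀
  have hh₀ : 0 < h₀ := hh₀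
  refine ContinuousAt.continuousWithinAt ?_
  refine intervalIntegral.continuousAt_of_dominated_interval
    (bound := fun p => (h₀ / 2) ^ γ * ‖w p‖) ?_ ?_ (hw.norm.const_mul _) ?_
  · refine Eventually.of_forall fun h => ?_
    exact (Measurable.aestronglyMeasurable (by fun_prop)).smul hw.def'.aestronglyMeasurable
  · filter_upwards [Ioi_mem_nhds (show h₀ / 2 < h₀ by linarith)] with h hh
    filter_upwards with p hp
    rw [uIoc_of_le hs.le] at hp
    have hh : h₀ / 2 < h := hh
    have h1 : h₀ / 2 ≤ h + s - p := by linarith [hp.2]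
    rw [norm_smul, Real.norm_of_nonneg (Real.rpow_nonneg (by linarith) _)]
    exact mul_le_mul_of_nonneg_right
      (Real.rpow_le_rpow_of_nonpos (by linarith) h1 hγ) (norm_nonneg _)
  · filter_upwards with p hp
    rw [uIoc_of_le hs.le] at hp
    refine ContinuousAt.smul ?_ continuousAt_const
    exact ContinuousAt.rpow_const (by fun_prop) (Or.inl (by linarith [hp.2]))

end RL

section RL2

variable {X : Type*} [NormedAddCommGroup X] [NormedSpace ℝ X]

lemma rl_one (t : ℝ) (f : ℝ → X) : RLint 1 t f = ∫ σ in (0:ℝ)..t, f σ := by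
  simp [RLint]

lemma rl_congr {a t : ℝ} (ht : 0 ≤ t) {f g : ℝ → X} (h : ∀ σ ∈ Ioo 0 t, f σ = g σ) :
    RLint a t f = RLint a t g := by
  unfold RLint
  congr 1
  exact integral_congr_Ioo_of_le ht fun σ hσ => by rw [h σ hσ]

lemma integral_truncated {s p : ℝ} (hs : 0 ≤ s) (hp : s ≤ p) (k : ℝ → ℝ) (u : ℝ → X) :
    ∫ σ in (0:ℝ)..p, k σ • indicator (Ioc 0 s) u σ = ∫ σ in (0:ℝ)..s, k σ • u σ := by
  have : ∀ σ, k σ • indicator (Ioc 0 s) u σ = indicator (Ioc 0 s) (fun σ => k σ • u σ) σ := by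
    intro σ; by_cases h : σ ∈ Ioc 0 s <;> simp [indicator, h]
  simp only [this]
  rw [intervalIntegral.integral_of_le (hs.trans hp), intervalIntegral.integral_of_le hs,
    setIntegral_indicator measurableSet_Ioc, inter_eq_self_of_subset_right (Ioc_subset_Ioc_right hp)]

/-- Splitting `J^a (J^b u)(h + s)` at `s`, for `u` cut off after `s` and `a + b = 1`: this
computes `J^a` of the tail `r ↦ ∫_0^s g_b(r + s - p) u(p) dp`. -/
lemma rl_tail [CompleteSpace X] {a b c s h C : ℝ} (ha : 0 < a) (hb : 0 < b) (hc : 0 < c)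
    (hab : a + b = 1) (hs : 0 < s) (hh : 0 < h) {u : ℝ → X}
    (hu : AEStronglyMeasurable u (volume.restrict (Ioc 0 s)))
    (hbd : ∀ σ ∈ Ioc 0 s, ‖u σ‖ ≤ C * σ ^ (c - 1)) :
    RLint a h (fun r => (Real.Gamma b)⁻¹ • ∫ p in (0:ℝ)..s, (r + s - p) ^ (b - 1) • u p) =
      RLint 1 s u - (Real.Gamma a)⁻¹ •
        ∫ p in (0:ℝ)..s, (h + s - p) ^ (a - 1) • RLint b p u := by
  have hC : 0 ≤ C := by
    have h1 := (norm_nonneg _).trans (hbd s ⟨hs, le_rfl⟩)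
    exact nonneg_of_mul_nonneg_left h1 (Real.rpow_pos_of_pos hs _)
  have H := rl_semigroup (a := a) (b := b) (c := c) (t := h + s) (C := C)
    (f := indicator (Ioc 0 s) u) ha hb hc (by linarith) ?_ ?_
  · obtain ⟨hi, hsg⟩ := H
    rw [hab, rl_one] at hsg
    have e0 := integral_truncated (p := h + s) hs.le (by linarith) (fun _ => 1) u
    simp only [one_smul] at e0
    rw [e0] at hsg
    rw [rl_one, ← hsg]
    have hmem : s ∈ uIcc 0 (h + s) := by
      rw [uIcc_of_le (by linarith)]; exact ⟨hs.le, by linarith⟩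
    have hsp := intervalIntegral.integral_add_adjacent_intervals
      (hi.mono_set (uIcc_subset_uIcc left_mem_uIcc hmem))
      (hi.mono_set (uIcc_subset_uIcc hmem right_mem_uIcc))
    have hsp1 : ∫ p in (0:ℝ)..s, (h + s - p) ^ (a - 1) • RLint b p (indicator (Ioc 0 s) u) =
        ∫ p in (0:ℝ)..s, (h + s - p) ^ (a - 1) • RLint b p u := by
      refine integral_congr_Ioo_of_le hs.le fun p hp => ?_
      congr 1
      refine rl_congr hp.1.le fun σ hσ => ?_
      exact indicator_of_mem (show σ ∈ Ioc 0 s from ⟨hσ.1, (hσ.2.trans hp.2).le⟩) _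
    have hsp2 : ∫ r in s..(h + s), (h + s - r) ^ (a - 1) • RLint b r (indicator (Ioc 0 s) u) =
        ∫ r in (0:ℝ)..h, (h - r) ^ (a - 1) •
          ((Real.Gamma b)⁻¹ • ∫ p in (0:ℝ)..s, (r + s - p) ^ (b - 1) • u p) := by
      have h2 := intervalIntegral.integral_comp_add_right (a := 0) (b := h)
        (fun r => (h + s - r) ^ (a - 1) • RLint b r (indicator (Ioc 0 s) u)) s
      rw [zero_add] at h2
      rw [← h2]
      refine integral_congr_Ioo_of_le hh.le fun r hr => ?_
      rw [show h + s - (r + s) = h - r by ring]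
      congr 1
      unfold RLint
      rw [integral_truncated hs.le (by linarith [hr.1])]
    rw [hsp1, hsp2] at hsp
    unfold RLint at hsp ⊢
    rw [← hsp, smul_add]
    abel
  · refine AEStronglyMeasurable.restrict ?_
    exact (aestronglyMeasurable_indicator_iff measurableSet_Ioc).2 hu
  · intro σ hσ
    by_cases h1 : σ ∈ Ioc 0 s
    · rw [indicator_of_mem h1]; exact hbd σ h1
    · rw [indicator_of_notMem h1, norm_zero]
      exact mul_nonneg hC (Real.rpow_nonneg hσ.1.le _)

/-- `J^b g_a = 1` when `a + b = 1`. -/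
lemma rl_rpow_const [CompleteSpace X] {a b t : ℝ} (ha : 0 < a) (hb : 0 < b) (hab : a + b = 1)
    (ht : 0 < t) (x : X) :
    RLint b t (fun r => (r ^ (a - 1) / Real.Gamma a) • x) = x := by
  unfold RLint
  have : ∀ σ : ℝ, (t - σ) ^ (b - 1) • (σ ^ (a - 1) / Real.Gamma a) • x =
      ((t - σ) ^ (b - 1) * σ ^ (a - 1)) • (Real.Gamma a)⁻¹ • x := by
    intro σ; rw [smul_smul, smul_smul]; congr 1; ring
  simp only [this]
  rw [intervalIntegral.integral_smul_const, beta_value hb ha ht, add_comm b a, hab, smul_smul,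
    smul_smul]
  have h1 := (Real.Gamma_pos_of_pos ha).ne'
  have h2 := (Real.Gamma_pos_of_pos hb).ne'
  rw [show (Real.Gamma b)⁻¹ * (t ^ ((1:ℝ) - 1) * (Real.Gamma b * Real.Gamma a / Real.Gamma 1)) *
    (Real.Gamma a)⁻¹ = 1 by simp; field_simp, one_smul]

end RL2

/-! ### Bounds, measurability and integrability for the family -/

section Family

variable {X : Type*} [NormedAddCommGroup X] [NormedSpace ℝ X] [CompleteSpace X]
  {α : ℝ} {T : ℝ → X →L[ℝ] X}

/-- Uniform boundedness applied to `σ^{2-α} T(σ)`, which is pointwise bounded on `(0, b]` by its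
limit at `0` and strong continuity. -/
lemma family_bound (hT : IsRLFracCosine α T) {b : ℝ} (hb : 0 < b) :
    ∃ M, 0 ≤ M ∧ ∀ σ ∈ Ioc 0 b, ‖T σ‖ ≤ M * σ ^ (α - 1 - 1) := by
  obtain ⟨hc, h0, -⟩ := hT
  have hpt : ∀ x, ∃ C, ∀ i : Ioc (0:ℝ) b, ‖(((i : ℝ) ^ (2 - α)) • T i) x‖ ≤ C := by
    intro x
    have h1 : ∀ᶠ t in 𝓝[>] (0:ℝ), ‖t ^ (2 - α) • T t x‖ < ‖(Real.Gamma (α - 1))⁻¹ • x‖ + 1 :=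
      (h0 x).norm.eventually_lt_const (by linarith)
    obtain ⟨δ, hδ, hδs⟩ := mem_nhdsGT_iff_exists_Ioo_subset.1 h1
    have hδ : 0 < δ := hδ
    have hcont : ContinuousOn (fun t : ℝ => t ^ (2 - α) • T t x) (Icc (δ / 2) b) := by
      refine ContinuousOn.smul ?_ ((hc x).mono fun t ht => ?_)
      · exact ContinuousOn.rpow_const continuousOn_id fun t ht => Or.inl (by
          have := ht.1; change t ≠ 0; linarith)
      · exact lt_of_lt_of_le (by positivity) ht.1
    obtain ⟨C, hC⟩ := isCompact_Icc.exists_bound_of_continuousOn hcont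
    refine ⟨max C (‖(Real.Gamma (α - 1))⁻¹ • x‖ + 1), fun i => ?_⟩
    by_cases hi : (i : ℝ) < δ
    · exact le_max_of_le_right (hδs ⟨i.2.1, hi⟩).le
    · exact le_max_of_le_left (hC i ⟨by linarith, i.2.2⟩)
  obtain ⟨M, hM⟩ := banach_steinhaus hpt
  have hM0 : 0 ≤ M := (norm_nonneg _).trans (hM ⟨b, hb, le_rfl⟩)
  refine ⟨M, hM0, fun σ hσ => ?_⟩
  have h1 := hM ⟨σ, hσ⟩
  have hp := Real.rpow_pos_of_pos hσ.1 (2 - α)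
  rw [norm_smul, Real.norm_of_nonneg hp.le] at h1
  rw [show α - 1 - 1 = -(2 - α) by ring, Real.rpow_neg hσ.1.le, ← div_eq_mul_inv, le_div_iff₀ hp,
    mul_comm]
  exact h1

/-- Joint continuity of `(σ, z) ↦ T(σ)z`, the source of measurability for integrands
`T(σ)φ(t - σ)`. -/
lemma family_joint (hT : IsRLFracCosine α T) :
    ContinuousOn (fun p : ℝ × X => T p.1 p.2) (Ioi 0 ×ˢ univ) := by
  rintro ⟨σ₀, z₀⟩ ⟨hσ₀, -⟩
  have hσ₀ : 0 < σ₀ := hσ₀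
  refine ContinuousAt.continuousWithinAt ?_
  obtain ⟨M, hM0, hM⟩ := family_bound hT (b := σ₀ + 1) (by linarith)
  have hK : ∀ᶠ p : ℝ × X in 𝓝 (σ₀, z₀), ‖T p.1‖ ≤ M * p.1 ^ (α - 1 - 1) := by
    have : Ioo 0 (σ₀ + 1) ∈ 𝓝 σ₀ := Ioo_mem_nhds hσ₀ (by linarith)
    filter_upwards [prod_mem_nhds this univ_mem] with p hp
    exact hM _ ⟨hp.1.1, hp.1.2.le⟩
  have h1 : Tendsto (fun p : ℝ × X => T p.1 (p.2 - z₀)) (𝓝 (σ₀, z₀)) (𝓝 0) := by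
    refine squeeze_zero_norm' (a := fun p : ℝ × X => M * p.1 ^ (α - 1 - 1) * ‖p.2 - z₀‖) ?_ ?_
    · filter_upwards [hK] with p hp
      exact (ContinuousLinearMap.le_opNorm _ _).trans
        (mul_le_mul_of_nonneg_right hp (norm_nonneg _))
    · have hcont : ContinuousAt (fun p : ℝ × X => M * p.1 ^ (α - 1 - 1) * ‖p.2 - z₀‖) (σ₀, z₀) := by
        refine ContinuousAt.mul (ContinuousAt.mul continuousAt_const ?_) (by fun_prop)
        exact ContinuousAt.rpow_const continuousAt_fst (Or.inl hσ₀.ne')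
      have := hcont.tendsto
      simpa using this
  have h2 : Tendsto (fun p : ℝ × X => T p.1 z₀) (𝓝 (σ₀, z₀)) (𝓝 (T σ₀ z₀)) :=
    ((hT.1 z₀).continuousAt (Ioi_mem_nhds hσ₀)).tendsto.comp continuousAt_fst
  have h3 := h1.add h2
  rw [zero_add] at h3
  refine h3.congr fun p => ?_
  simp

lemma family_bound_apply (hT : IsRLFracCosine α T) {b : ℝ} (hb : 0 < b) (z : X) :
    ∃ C, 0 ≤ C ∧ ∀ σ ∈ Ioc 0 b, ‖T σ z‖ ≤ C * σ ^ (α - 1 - 1) := by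
  obtain ⟨M, hM0, hM⟩ := family_bound hT hb
  refine ⟨M * ‖z‖, by positivity, fun σ hσ => ?_⟩
  calc _ ≤ ‖T σ‖ * ‖z‖ := ContinuousLinearMap.le_opNorm _ _
    _ ≤ M * σ ^ (α - 1 - 1) * ‖z‖ := mul_le_mul_of_nonneg_right (hM σ hσ) (norm_nonneg _)
    _ = _ := by ring

lemma family_meas {X : Type*} [NormedAddCommGroup X] [NormedSpace ℝ X]
    {α : ℝ} {T : ℝ → X →L[ℝ] X} (hT : IsRLFracCosine α T) (z : X) {s : Set ℝ} (hs : MeasurableSet s)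
    (h : s ⊆ Ioi 0) : AEStronglyMeasurable (fun σ => T σ z) (volume.restrict s) :=
  ((hT.1 z).mono h).aestronglyMeasurable hs

lemma family_rl_integrable (hT : IsRLFracCosine α T) (hα : 1 < α) {a t : ℝ} (ha : 0 < a)
    (ht : 0 < t) (z : X) :
    IntervalIntegrable (fun σ => (t - σ) ^ (a - 1) • T σ z) volume 0 t := by
  obtain ⟨C, -, hC⟩ := family_bound_apply hT ht z
  exact rl_integrable ha (sub_pos.2 hα) ht
    (family_meas hT z measurableSet_Ioo fun σ hσ => hσ.1)
    (fun σ hσ => hC σ ⟨hσ.1, hσ.2.le⟩)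

lemma family_integrable (hT : IsRLFracCosine α T) (hα : 1 < α) {t : ℝ} (ht : 0 < t) (z : X) :
    IntervalIntegrable (fun σ => T σ z) volume 0 t := by
  simpa using family_rl_integrable hT hα one_pos ht z

lemma family_semigroup (hT : IsRLFracCosine α T) (hα : 1 < α) {a b t : ℝ} (ha : 0 < a) (hb : 0 < b)
    (ht : 0 < t) (z : X) :
    IntervalIntegrable (fun r => (t - r) ^ (a - 1) • RLint b r (fun σ => T σ z)) volume 0 t ∧
      RLint a t (fun r => RLint b r (fun σ => T σ z)) = RLint (a + b) t (fun σ => T σ z) := by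
  obtain ⟨C, -, hC⟩ := family_bound_apply hT ht z
  exact rl_semigroup ha hb (sub_pos.2 hα) ht
    (family_meas hT z measurableSet_Ioo fun σ hσ => hσ.1)
    (fun σ hσ => hC σ ⟨hσ.1, hσ.2.le⟩)

end Family

/-! ### Convolutions with the family and the functional equation -/

section Tail

variable {X : Type*} [NormedAddCommGroup X] [NormedSpace ℝ X]

lemma kernel_integrable {γ s h : ℝ} (hs : 0 < s) (hh : 0 < h) {w : ℝ → X}
    (hw : IntervalIntegrable w volume 0 s) :
    IntervalIntegrable (fun p => (h + s - p) ^ γ • w p) volume 0 s := by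
  refine hw.continuousOn_smul ?_
  refine ContinuousOn.rpow_const (by fun_prop) fun p hp => Or.inl ?_
  rw [uIcc_of_le hs.le] at hp
  linarith [hp.2]

lemma kernel_bound {γ s h : ℝ} (hγ : γ ≤ 0) (hs : 0 < s) (hh : 0 < h) {w : ℝ → X}
    (hw : IntervalIntegrable w volume 0 s) :
    ‖∫ p in (0:ℝ)..s, (h + s - p) ^ γ • w p‖ ≤ h ^ γ * ∫ p in (0:ℝ)..s, ‖w p‖ := by
  rw [← intervalIntegral.integral_const_mul]
  refine intervalIntegral.norm_integral_le_of_norm_le hs.le ?_ (hw.norm.const_mul _)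
  filter_upwards with p hp
  rw [norm_smul, Real.norm_of_nonneg (Real.rpow_nonneg (by linarith [hp.2]) _)]
  exact mul_le_mul_of_nonneg_right
    (Real.rpow_le_rpow_of_nonpos hh (by linarith [hp.2]) hγ) (norm_nonneg _)

variable [CompleteSpace X] {α : ℝ} {T : ℝ → X →L[ℝ] X}

/-- The convolution of `T` with a function `φ` having at most a power singularity at `0`: it is
integrable, and bounded linearly in the constant `D` controlling `φ`. -/
lemma tail_integrable (hT : IsRLFracCosine α T) (hα : 1 < α) {b t D : ℝ} (hb : 0 < b)
    (ht : 0 < t) {φ : ℝ → X} (hφ : ContinuousOn φ (Ioi 0))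
    (hD : ∀ h ∈ Ioo 0 t, ‖φ h‖ ≤ D * h ^ (b - 1)) :
    IntervalIntegrable (fun σ => T σ (φ (t - σ))) volume 0 t ∧
      ∀ M, 0 ≤ M → (∀ σ ∈ Ioc 0 t, ‖T σ‖ ≤ M * σ ^ (α - 1 - 1)) →
        ‖∫ σ in (0:ℝ)..t, T σ (φ (t - σ))‖ ≤
          D * (M * ∫ σ in (0:ℝ)..t, (t - σ) ^ (b - 1) * σ ^ (α - 1 - 1)) := by
  have hbd : ∀ M, 0 ≤ M → (∀ σ ∈ Ioc 0 t, ‖T σ‖ ≤ M * σ ^ (α - 1 - 1)) → ∀ σ ∈ Ioo 0 t,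
      ‖T σ (φ (t - σ))‖ ≤ D * (M * ((t - σ) ^ (b - 1) * σ ^ (α - 1 - 1))) := by
    intro M hM0 hM σ hσ
    calc _ ≤ ‖T σ‖ * ‖φ (t - σ)‖ := ContinuousLinearMap.le_opNorm _ _
      _ ≤ (M * σ ^ (α - 1 - 1)) * (D * (t - σ) ^ (b - 1)) := by
        refine mul_le_mul (hM σ ⟨hσ.1, hσ.2.le⟩)
          (hD _ ⟨by linarith [hσ.2], by linarith [hσ.1]⟩) (norm_nonneg _) ?_
        exact mul_nonneg hM0 (Real.rpow_nonneg hσ.1.le _)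
      _ = _ := by ring
  have hI := beta_integrable hb (sub_pos.2 hα) ht
  constructor
  · obtain ⟨M, hM0, hM⟩ := family_bound hT ht
    have hI' := (hI.const_mul M).const_mul D
    rw [intervalIntegrable_iff_integrableOn_Ioo_of_le ht.le] at hI' ⊢
    refine hI'.mono' ?_ (ae_restrict_of_forall_mem measurableSet_Ioo (hbd M hM0 hM))
    refine ContinuousOn.aestronglyMeasurable ?_ measurableSet_Ioo
    refine (family_joint hT).comp (f := fun σ => (σ, φ (t - σ))) ?_ fun σ hσ => ⟨hσ.1, mem_univ _⟩
    refine continuousOn_id.prodMk (hφ.comp (by fun_prop) fun σ hσ => ?_)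
    exact sub_pos.2 hσ.2
  · intro M hM0 hM
    rw [← intervalIntegral.integral_const_mul, ← intervalIntegral.integral_const_mul]
    refine intervalIntegral.norm_integral_le_of_norm_le ht.le ?_ ((hI.const_mul M).const_mul D)
    have hne : ∀ᵐ σ : ℝ, σ ≠ t := by
      simp [ae_iff, measure_singleton]
    filter_upwards [hne] with σ h1 hσ
    exact hbd M hM0 hM σ ⟨hσ.1, lt_of_le_of_ne hσ.2 h1⟩

/-- Associativity of convolution, `g_a * (T * φ) = T * (g_a * φ)`. -/
lemma tail_convolution (hT : IsRLFracCosine α T) (hα : 1 < α) {a b t D : ℝ} (ha : 0 < a)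
    (hb : 0 < b) (ht : 0 < t) {φ : ℝ → X} (hφ : ContinuousOn φ (Ioi 0))
    (hD : ∀ h ∈ Ioo 0 t, ‖φ h‖ ≤ D * h ^ (b - 1)) :
    IntervalIntegrable (fun r => (t - r) ^ (a - 1) • ∫ σ in (0:ℝ)..r, T σ (φ (r - σ))) volume 0 t ∧
      RLint a t (fun r => ∫ σ in (0:ℝ)..r, T σ (φ (r - σ))) =
        ∫ σ in (0:ℝ)..t, T σ (RLint a (t - σ) φ) := by
  obtain ⟨M, hM0, hM⟩ := family_bound hT ht
  have H := triangle_swap (a := a) (b := b) (c := α - 1) (C := M * D) ha hb (sub_pos.2 hα) ht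
    (fun r σ => (t - r) ^ (a - 1) • T σ (φ (r - σ))) ?_ ?_
  · obtain ⟨hi, -, hsw⟩ := H
    simp only [intervalIntegral.integral_smul] at hi
    refine ⟨hi, ?_⟩
    unfold RLint
    have e0 : ∀ r, (t - r) ^ (a - 1) • ∫ σ in (0:ℝ)..r, T σ (φ (r - σ)) =
        ∫ σ in (0:ℝ)..r, (t - r) ^ (a - 1) • T σ (φ (r - σ)) := fun r =>
      (intervalIntegral.integral_smul _ _).symm
    simp only [e0]
    rw [hsw, ← intervalIntegral.integral_smul]
    refine integral_congr_Ioo_of_le ht.le fun σ hσ => ?_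
    have hts : 0 < t - σ := sub_pos.2 hσ.2
    have h2 := intervalIntegral.integral_comp_add_right (a := 0) (b := t - σ)
      (fun r => (t - r) ^ (a - 1) • T σ (φ (r - σ))) σ
    rw [zero_add, sub_add_cancel] at h2
    rw [← h2, map_smul]
    congr 1
    rw [← ContinuousLinearMap.intervalIntegral_comp_comm]
    · refine intervalIntegral.integral_congr fun r _ => ?_
      simp only [map_smul, add_sub_cancel_right]
      rw [show t - (r + σ) = t - σ - r by ring]
    · refine rl_integrable ha hb hts ((hφ.mono fun r hr => hr.1).aestronglyMeasurable
        measurableSet_Ioo) (C := D) fun r hr => hD r ⟨hr.1, by linarith [hr.2, hσ.1]⟩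
  · rw [Measure.prod_restrict, Measure.restrict_restrict
      (measurableSet_lt measurable_snd measurable_fst)]
    refine ContinuousOn.aestronglyMeasurable ?_
      ((measurableSet_lt measurable_snd measurable_fst).inter
        (measurableSet_Ioo.prod measurableSet_Ioo))
    refine ContinuousOn.smul ?_ ?_
    · refine ContinuousOn.rpow_const (by fun_prop) fun p hp => Or.inl ?_
      linarith [hp.2.1.2]
    · refine (family_joint hT).comp (f := fun p : ℝ × ℝ => (p.2, φ (p.1 - p.2))) ?_
        fun p hp => ⟨hp.2.2.1, mem_univ _⟩
      refine continuousOn_snd.prodMk (hφ.comp (by fun_prop) fun p hp => ?_)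
      exact sub_pos.2 (show p.2 < p.1 from hp.1)
  · intro r σ h1 h2 h3
    have e1 : 0 ≤ (t - r) ^ (a - 1) := Real.rpow_nonneg (by linarith) _
    rw [norm_smul, Real.norm_of_nonneg e1]
    calc _ ≤ (t - r) ^ (a - 1) * ((M * σ ^ (α - 1 - 1)) * (D * (r - σ) ^ (b - 1))) := by
          refine mul_le_mul_of_nonneg_left ?_ e1
          refine (ContinuousLinearMap.le_opNorm _ _).trans ?_
          refine mul_le_mul (hM σ ⟨h1, (h2.trans h3).le⟩)
            (hD _ ⟨by linarith, by linarith⟩) (norm_nonneg _) ?_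
          exact mul_nonneg hM0 (Real.rpow_nonneg h1.le _)
      _ = _ := by ring

/-- The functional equation divided by `Γ(2-α)`, with the operators `T σ` pulled out of the
inner integrals. -/
lemma functional_equation (hT : IsRLFracCosine α T) (hα : α ∈ Ioo (1:ℝ) 2) {r s : ℝ} (hr : 0 < r)
    (hs : 0 < s) (x : X) :
    RLint 1 (r + s) (fun σ => T σ x) =
      RLint (2 - α) r (fun σ => T σ (RLint 1 s (fun τ => T τ x))) +
      RLint 1 r (fun σ => T σ (RLint (2 - α) s (fun τ => T τ x))) -
      ∫ σ in (0:ℝ)..r, T σ ((Real.Gamma (2 - α))⁻¹ •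
        ∫ τ in (0:ℝ)..s, (r - σ + s - τ) ^ (2 - α - 1) • T τ x) := by
  have hβ : 0 < 2 - α := by linarith [hα.2]
  have hΓ := (Real.Gamma_pos_of_pos hβ).ne'
  have h := hT.2.2 x r hr s hs
  rw [show 1 - α = 2 - α - 1 by ring] at h
  have hu := family_integrable hT hα.1 hs x
  have e1 : ∀ σ ∈ Ioo 0 r, ∫ τ in (0:ℝ)..s, (r - σ) ^ (2 - α - 1) • T σ (T τ x) =
      (r - σ) ^ (2 - α - 1) • T σ (RLint 1 s (fun τ => T τ x)) := by
    intro σ _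
    rw [intervalIntegral.integral_smul, ContinuousLinearMap.intervalIntegral_comp_comm _ hu, rl_one]
  have e2 : ∀ σ ∈ Ioo 0 r, ∫ τ in (0:ℝ)..s, (s - τ) ^ (2 - α - 1) • T σ (T τ x) =
      Real.Gamma (2 - α) • T σ (RLint (2 - α) s (fun τ => T τ x)) := by
    intro σ _
    rw [← map_smul, RLint, smul_inv_smul₀ hΓ, ← ContinuousLinearMap.intervalIntegral_comp_comm _
      (family_rl_integrable hT hα.1 hβ hs x)]
    simp only [map_smul]
  have e3 : ∀ σ ∈ Ioo 0 r, ∫ τ in (0:ℝ)..s, (r + s - σ - τ) ^ (2 - α - 1) • T σ (T τ x) =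
      Real.Gamma (2 - α) • T σ ((Real.Gamma (2 - α))⁻¹ •
        ∫ τ in (0:ℝ)..s, (r - σ + s - τ) ^ (2 - α - 1) • T τ x) := by
    intro σ hσ
    rw [← map_smul, smul_inv_smul₀ hΓ, ← ContinuousLinearMap.intervalIntegral_comp_comm _
      (kernel_integrable hs (sub_pos.2 hσ.2) hu)]
    refine intervalIntegral.integral_congr fun τ _ => ?_
    simp only [map_smul]
    rw [show r + s - σ - τ = r - σ + s - τ by ring]
  rw [integral_congr_Ioo_of_le hr.le e1, integral_congr_Ioo_of_le hr.le e2,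
    integral_congr_Ioo_of_le hr.le e3, intervalIntegral.integral_smul,
    intervalIntegral.integral_smul] at h
  rw [rl_one, rl_one r, ← smul_right_inj hΓ, h, smul_sub, smul_add]
  congr 2
  exact (smul_inv_smul₀ hΓ _).symm

end Tail

/-! ### The exact identity -/

section Key

variable {X : Type*} [NormedAddCommGroup X] [NormedSpace ℝ X]

/-- `J_s^{2-α}(T(s)x − g_{α-1}(s) x)`, the quantity whose leading coefficient at `s → 0+` is the
generator applied to `x`. -/
noncomputable def rlDefect (α : ℝ) (T : ℝ → X →L[ℝ] X) (x : X) (s : ℝ) : X :=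
  RLint (2 - α) s (fun r => T r x - (r ^ (α - 2) / Real.Gamma (α - 1)) • x)

/-- The tail `h ↦ J^{2-α}(1_{(0,s)} T(·)x)(h + s)` of a fractional integral past `s`. -/
noncomputable def rlTail (α : ℝ) (T : ℝ → X →L[ℝ] X) (x : X) (s h : ℝ) : X :=
  (Real.Gamma (2 - α))⁻¹ • ∫ τ in (0:ℝ)..s, (h + s - τ) ^ (2 - α - 1) • T τ x

/-- `h ↦ J^{α-1}(1_{(0,s)} rlDefect)(h + s)`, which is of higher order as `s → 0+`. -/
noncomputable def rlError (α : ℝ) (T : ℝ → X →L[ℝ] X) (x : X) (s h : ℝ) : X :=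
  (Real.Gamma (α - 1))⁻¹ • ∫ p in (0:ℝ)..s, (h + s - p) ^ (α - 1 - 1) • rlDefect α T x p

variable [CompleteSpace X] {α : ℝ} {T : ℝ → X →L[ℝ] X}

lemma defect_eq (hT : IsRLFracCosine α T) (hα : α ∈ Ioo (1:ℝ) 2) {s : ℝ} (hs : 0 < s) (x : X) :
    RLint (2 - α) s (fun τ => T τ x) = x + rlDefect α T x s := by
  have ha : 0 < α - 1 := by linarith [hα.1]
  have hβ : 0 < 2 - α := by linarith [hα.2]
  have h1 := rl_rpow_const (X := X) ha hβ (by ring) hs x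
  have hI := family_rl_integrable hT hα.1 hβ hs x
  have hJ : IntervalIntegrable (fun σ => (s - σ) ^ (2 - α - 1) •
      ((σ ^ (α - 1 - 1) / Real.Gamma (α - 1)) • x)) volume 0 s := by
    refine rl_integrable hβ ha hs (C := (Real.Gamma (α - 1))⁻¹ * ‖x‖)
      ((Measurable.aestronglyMeasurable (by fun_prop)).smul aestronglyMeasurable_const) ?_
    intro σ hσ
    have := Real.Gamma_pos_of_pos ha
    have h2 := Real.rpow_nonneg hσ.1.le (α - 1 - 1)
    rw [norm_smul, Real.norm_of_nonneg (by positivity)]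
    exact le_of_eq (by ring)
  rw [rlDefect, show α - 2 = α - 1 - 1 by ring]
  nth_rewrite 2 [← h1]
  unfold RLint
  simp only [smul_sub]
  rw [intervalIntegral.integral_sub hI hJ, smul_sub]
  abel

lemma defect_integrable (hT : IsRLFracCosine α T) (hα : α ∈ Ioo (1:ℝ) 2) {s : ℝ} (hs : 0 < s)
    (x : X) : IntervalIntegrable (rlDefect α T x) volume 0 s := by
  have hβ : 0 < 2 - α := by linarith [hα.2]
  have h1 := (family_semigroup hT hα.1 one_pos hβ hs x).1
  simp only [sub_self, Real.rpow_zero, one_smul] at h1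
  have h2 := h1.sub (intervalIntegrable_const (c := x))
  rw [intervalIntegrable_iff_integrableOn_Ioo_of_le hs.le] at h2 ⊢
  refine h2.congr (ae_restrict_of_forall_mem measurableSet_Ioo fun p hp => ?_)
  simp only
  rw [defect_eq hT hα hp.1 x]
  abel

/-- `J^{α-1}` of the tail, evaluated by `rl_tail` after writing `J^{2-α}T(p)x = x + rlDefect p`. -/
lemma tail_eq (hT : IsRLFracCosine α T) (hα : α ∈ Ioo (1:ℝ) 2) {s h : ℝ} (hs : 0 < s) (hh : 0 < h)
    (x : X) :
    RLint (α - 1) h (rlTail α T x s) = RLint 1 s (fun τ => T τ x) -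
      ((Real.Gamma α)⁻¹ * ((h + s) ^ (α - 1) - h ^ (α - 1))) • x - rlError α T x s h := by
  have ha : 0 < α - 1 := by linarith [hα.1]
  have hβ : 0 < 2 - α := by linarith [hα.2]
  obtain ⟨C, -, hC⟩ := family_bound_apply hT hs x
  have h1 := rl_tail ha hβ ha (by ring) hs hh
    (family_meas hT x measurableSet_Ioc fun σ hσ => hσ.1) hC
  have h2 : ∫ p in (0:ℝ)..s, (h + s - p) ^ (α - 1 - 1) • RLint (2 - α) p (fun τ => T τ x) =
      ∫ p in (0:ℝ)..s, ((h + s - p) ^ (α - 1 - 1) • x +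
        (h + s - p) ^ (α - 1 - 1) • rlDefect α T x p) :=
    integral_congr_Ioo_of_le hs.le fun p hp => by rw [defect_eq hT hα hp.1, smul_add]
  have h3 : ∫ p in (0:ℝ)..s, (h + s - p) ^ (α - 1 - 1) =
      ((h + s) ^ (α - 1) - h ^ (α - 1)) / (α - 1) := by
    rw [intervalIntegral.integral_comp_sub_left (fun q : ℝ => q ^ (α - 1 - 1)),
      integral_rpow (Or.inl (by linarith))]
    simp
  rw [intervalIntegral.integral_add (kernel_integrable hs hh intervalIntegrable_const)
    (kernel_integrable hs hh (defect_integrable hT hα hs x)),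
    intervalIntegral.integral_smul_const, h3] at h2
  rw [h2] at h1
  refine h1.trans ?_
  have hΓ : Real.Gamma α = (α - 1) * Real.Gamma (α - 1) := by
    rw [← Real.Gamma_add_one ha.ne', sub_add_cancel]
  have hc : (Real.Gamma (α - 1))⁻¹ * (((h + s) ^ (α - 1) - h ^ (α - 1)) / (α - 1)) =
      (Real.Gamma α)⁻¹ * ((h + s) ^ (α - 1) - h ^ (α - 1)) := by
    rw [hΓ, mul_inv]
    ring
  rw [smul_add, smul_smul, hc, rlError, sub_add_eq_sub_sub]

/-- `J^{α-1}` in the variable `t` applied to the functional equation. -/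
lemma convolved_equation (hT : IsRLFracCosine α T) (hα : α ∈ Ioo (1:ℝ) 2) {t s : ℝ} (ht : 0 < t)
    (hs : 0 < s) (x : X) :
    RLint (α - 1) t (fun r => RLint 1 (r + s) (fun σ => T σ x)) =
      RLint 1 t (fun σ => T σ (RLint 1 s (fun τ => T τ x))) +
      RLint α t (fun σ => T σ (RLint (2 - α) s (fun τ => T τ x))) -
      ∫ σ in (0:ℝ)..t, T σ (RLint (α - 1) (t - σ) (rlTail α T x s)) := by
  have ha : 0 < α - 1 := by linarith [hα.1]
  have hβ : 0 < 2 - α := by linarith [hα.2]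
  have hΓ := Real.Gamma_pos_of_pos hβ
  have hu := family_integrable hT hα.1 hs x
  obtain ⟨i1, e1⟩ := family_semigroup hT hα.1 ha hβ ht (RLint 1 s (fun τ => T τ x))
  obtain ⟨i2, e2⟩ := family_semigroup hT hα.1 ha one_pos ht (RLint (2 - α) s (fun τ => T τ x))
  obtain ⟨i3, e3⟩ := tail_convolution hT hα.1 (a := α - 1) (b := 2 - α) (t := t)
    (D := (Real.Gamma (2 - α))⁻¹ * ∫ p in (0:ℝ)..s, ‖T p x‖) (φ := rlTail α T x s) ha hβ ht
    ((kernel_continuousOn (by linarith [hα.1]) hs hu).const_smul _) (by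
      intro h hh
      rw [rlTail, norm_smul, Real.norm_of_nonneg (inv_nonneg.2 hΓ.le), mul_assoc]
      refine mul_le_mul_of_nonneg_left ?_ (inv_nonneg.2 hΓ.le)
      rw [mul_comm]
      exact kernel_bound (by linarith [hα.1]) hs hh.1 hu)
  rw [show α - 1 + (2 - α) = 1 by ring] at e1
  rw [show α - 1 + 1 = α by ring] at e2
  rw [← e1, ← e2, ← e3]
  rw [rl_congr ht.le fun r hr => functional_equation hT hα hr.1 hs x]
  unfold RLint at i1 i2 ⊢
  simp only [smul_add, smul_sub]
  rw [← smul_add, ← smul_sub, ← intervalIntegral.integral_add i1 i2,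
    ← intervalIntegral.integral_sub (i1.add i2) i3]
  rfl

/-- Splitting `J^{α-1} J^1 T(t + s)x` at `s` expresses the left side of `convolved_equation`. -/
lemma shifted_integral (hT : IsRLFracCosine α T) (hα : α ∈ Ioo (1:ℝ) 2) {t s : ℝ} (ht : 0 < t)
    (hs : 0 < s) (x : X) :
    RLint (α - 1) t (fun r => RLint 1 (r + s) (fun σ => T σ x)) =
      RLint α (t + s) (fun σ => T σ x) - (Real.Gamma (α - 1))⁻¹ •
        ∫ r in (0:ℝ)..s, (t + s - r) ^ (α - 1 - 1) • RLint 1 r (fun σ => T σ x) := by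
  have ha : 0 < α - 1 := by linarith [hα.1]
  obtain ⟨hi, e2⟩ := family_semigroup hT hα.1 ha one_pos (add_pos ht hs) x
  rw [show α - 1 + 1 = α by ring] at e2
  have hmem : s ∈ uIcc 0 (t + s) := by
    rw [uIcc_of_le (by linarith)]; exact ⟨hs.le, by linarith⟩
  have hsp := intervalIntegral.integral_add_adjacent_intervals
    (hi.mono_set (uIcc_subset_uIcc left_mem_uIcc hmem))
    (hi.mono_set (uIcc_subset_uIcc hmem right_mem_uIcc))
  have h2 := intervalIntegral.integral_comp_add_right (a := 0) (b := t)
    (fun r => (t + s - r) ^ (α - 1 - 1) • RLint 1 r (fun σ => T σ x)) s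
  rw [zero_add] at h2
  rw [← e2, RLint, RLint, ← hsp, ← h2, smul_add, add_sub_cancel_left]
  simp only [add_sub_add_right_eq_sub]

lemma error_integral (hT : IsRLFracCosine α T) (hα : α ∈ Ioo (1:ℝ) 2) {t s : ℝ} (ht : 0 < t)
    (hs : 0 < s) (x : X) :
    IntervalIntegrable (fun σ => T σ (rlError α T x s (t - σ))) volume 0 t ∧
      ∀ M, 0 ≤ M → (∀ σ ∈ Ioc 0 t, ‖T σ‖ ≤ M * σ ^ (α - 1 - 1)) →
        ‖∫ σ in (0:ℝ)..t, T σ (rlError α T x s (t - σ))‖ ≤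
          ((Real.Gamma (α - 1))⁻¹ * ∫ p in (0:ℝ)..s, ‖rlDefect α T x p‖) *
            (M * ∫ σ in (0:ℝ)..t, (t - σ) ^ (α - 1 - 1) * σ ^ (α - 1 - 1)) := by
  have ha : 0 < α - 1 := by linarith [hα.1]
  have hΓ := Real.Gamma_pos_of_pos ha
  have hQ := defect_integrable hT hα hs x
  refine tail_integrable hT hα.1 ha ht
    ((kernel_continuousOn (by linarith [hα.2]) hs hQ).const_smul _) ?_
  intro h hh
  rw [rlError, norm_smul, Real.norm_of_nonneg (inv_nonneg.2 hΓ.le), mul_assoc]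
  refine mul_le_mul_of_nonneg_left ?_ (inv_nonneg.2 hΓ.le)
  rw [mul_comm]
  exact kernel_bound (by linarith [hα.2]) hs hh.1 hQ

/-- The exact identity whose leading order as `s → 0+` is the claimed formula at `t`. -/
lemma key_identity (hT : IsRLFracCosine α T) (hα : α ∈ Ioo (1:ℝ) 2) {t s : ℝ} (ht : 0 < t)
    (hs : 0 < s) (x : X) :
    (Real.Gamma α)⁻¹ • (∫ σ in t..(t + s), (t + s - σ) ^ (α - 1) • T σ x) -
      (Real.Gamma (α - 1))⁻¹ •
        (∫ r in (0:ℝ)..s, (t + s - r) ^ (α - 1 - 1) • RLint 1 r (fun σ => T σ x)) =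
      RLint α t (fun σ => T σ (rlDefect α T x s)) +
        ∫ σ in (0:ℝ)..t, T σ (rlError α T x s (t - σ)) := by
  have ha : 0 < α - 1 := by linarith [hα.1]
  have hα0 : 0 < α := by linarith [hα.1]
  have hΓ := Real.Gamma_pos_of_pos ha
  have hA := shifted_integral hT hα ht hs x
  have hB := convolved_equation hT hα ht hs x
  have hE := (error_integral hT hα ht hs x).1
  have hu := family_integrable hT hα.1 ht x
  have hP := family_integrable hT hα.1 ht (RLint 1 s (fun τ => T τ x))
  have hI := family_rl_integrable hT hα.1 hα0 ht x
  have hIQ := family_rl_integrable hT hα.1 hα0 ht (rlDefect α T x s)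
  have hIs : IntervalIntegrable (fun σ => (t + s - σ) ^ (α - 1) • T σ x) volume 0 (t + s) :=
    family_rl_integrable hT hα.1 hα0 (add_pos ht hs) x
  have hmem : t ∈ uIcc 0 (t + s) := by
    rw [uIcc_of_le (by linarith)]; exact ⟨ht.le, by linarith⟩
  have hIs1 := hIs.mono_set (uIcc_subset_uIcc left_mem_uIcc hmem)
  have hIs2 := hIs.mono_set (uIcc_subset_uIcc hmem right_mem_uIcc)
  have hsp := intervalIntegral.integral_add_adjacent_intervals hIs1 hIs2
  have hC : ∫ σ in (0:ℝ)..t, T σ (RLint (α - 1) (t - σ) (rlTail α T x s)) =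
      ∫ σ in (0:ℝ)..t, (T σ (RLint 1 s (fun τ => T τ x)) -
        ((Real.Gamma α)⁻¹ • ((t + s - σ) ^ (α - 1) • T σ x) -
          (Real.Gamma α)⁻¹ • ((t - σ) ^ (α - 1) • T σ x)) - T σ (rlError α T x s (t - σ))) := by
    refine integral_congr_Ioo_of_le ht.le fun σ hσ => ?_
    rw [tail_eq hT hα hs (sub_pos.2 hσ.2) x, map_sub, map_sub, map_smul, smul_smul, smul_smul,
      ← sub_smul, ← mul_sub, show t - σ + s = t + s - σ by ring]
  have hIs1' : IntervalIntegrable (fun σ => (Real.Gamma α)⁻¹ • ((t + s - σ) ^ (α - 1) • T σ x))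
      volume 0 t := ⟨hIs1.1.smul _, hIs1.2.smul _⟩
  have hI' : IntervalIntegrable (fun σ => (Real.Gamma α)⁻¹ • ((t - σ) ^ (α - 1) • T σ x))
      volume 0 t := ⟨hI.1.smul _, hI.2.smul _⟩
  rw [intervalIntegral.integral_sub (hP.sub (hIs1'.sub hI')) hE,
    intervalIntegral.integral_sub hP (hIs1'.sub hI'),
    intervalIntegral.integral_sub hIs1' hI', intervalIntegral.integral_smul,
    intervalIntegral.integral_smul] at hC
  have hD : RLint α t (fun σ => T σ (RLint (2 - α) s (fun τ => T τ x))) =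
      RLint α t (fun σ => T σ x) + RLint α t (fun σ => T σ (rlDefect α T x s)) := by
    rw [defect_eq hT hα hs x]
    unfold RLint
    simp only [map_add, smul_add]
    rw [intervalIntegral.integral_add hI hIQ, smul_add]
  rw [hA, hC, hD, rl_one t] at hB
  have hL : RLint α (t + s) (fun σ => T σ x) =
      (Real.Gamma α)⁻¹ • (∫ σ in (0:ℝ)..t, (t + s - σ) ^ (α - 1) • T σ x) +
      (Real.Gamma α)⁻¹ • (∫ σ in t..(t + s), (t + s - σ) ^ (α - 1) • T σ x) := by
    rw [RLint, ← hsp, smul_add]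
  have hR : RLint α t (fun σ => T σ x) =
      (Real.Gamma α)⁻¹ • (∫ σ in (0:ℝ)..t, (t - σ) ^ (α - 1) • T σ x) := rfl
  rw [hL, hR] at hB
  rw [← sub_eq_zero] at hB ⊢
  rw [← hB]
  abel

end Key

/-! ### Passing to the limit -/

section Limits

variable {X : Type*} [NormedAddCommGroup X] [NormedSpace ℝ X] [CompleteSpace X]
  {α : ℝ} {T : ℝ → X →L[ℝ] X}

/-- The integral of `T(σ)x` over the short interval `(t, t + s)` recovers `T(t)x`. -/
lemma forward_average_tendsto (hT : IsRLFracCosine α T) (hα : 1 < α) {t : ℝ} (ht : 0 < t) (x : X) :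
    Tendsto (fun s => (Real.Gamma (α + 1) * s ^ (-α)) • (Real.Gamma α)⁻¹ •
      ∫ σ in t..(t + s), (t + s - σ) ^ (α - 1) • T σ x) (𝓝[>] 0) (𝓝 (T t x)) := by
  have hα0 : 0 < α := by linarith
  have hcont : ContinuousOn (fun r => T r x) (Ioi 0) := hT.1 x
  have hsub : ∀ s : ℝ, ∫ σ in t..(t + s), (t + s - σ) ^ (α - 1) • T σ x =
      ∫ r in (0:ℝ)..s, r ^ (α - 1) • T (t + (s - r)) x := by
    intro s
    have := intervalIntegral.integral_comp_sub_left (a := t) (b := t + s)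
      (fun r => r ^ (α - 1) • T (t + (s - r)) x) (t + s)
    rw [sub_self, add_sub_cancel_left] at this
    rw [← this]
    refine intervalIntegral.integral_congr fun σ _ => ?_
    rw [show t + (s - (t + s - σ)) = σ by ring]
  have H := average_tendsto hα0 (fun a _ => T (t + a) x) (T t x) ?_ ?_
  · refine H.congr fun s => ?_
    rw [hsub, smul_smul, Real.Gamma_add_one hα0.ne']
    congr 1
    field_simp [(Real.Gamma_pos_of_pos hα0).ne']
  · have h1 : Tendsto (fun a : ℝ => T (t + a) x) (𝓝[≥] 0) (𝓝 (T t x)) := by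
      have h2 : ContinuousAt (fun r => T r x) (t + 0) := by
        rw [add_zero]; exact hcont.continuousAt (Ioi_mem_nhds ht)
      rw [show T t x = T (t + 0) x by rw [add_zero]]
      have h3 : Tendsto (fun a : ℝ => t + a) (𝓝[≥] 0) (𝓝 (t + 0)) :=
        (Continuous.tendsto (by fun_prop) 0).mono_left nhdsWithin_le_nhds
      exact h2.tendsto.comp h3
    exact h1.comp tendsto_fst
  · filter_upwards [self_mem_nhdsWithin] with s hs
    have hs : 0 < s := hs
    refine ContinuousOn.intervalIntegrable ?_
    rw [uIcc_of_le hs.le]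
    refine ContinuousOn.smul (ContinuousOn.rpow_const (by fun_prop) fun p _ => Or.inr (by linarith)) ?_
    refine hcont.comp (by fun_prop) fun r hr => ?_
    simp only [mem_Ioi]
    linarith [hr.2]

/-- Condition (ii) integrated once: `J^1 T(r)x ~ r^{α-1}/Γ(α) x`. -/
lemma primitive_tendsto (hT : IsRLFracCosine α T) (hα : 1 < α) (x : X) :
    Tendsto (fun r => (Real.Gamma α * r ^ (1 - α)) • RLint 1 r (fun σ => T σ x)) (𝓝[>] 0)
      (𝓝 x) := by
  have ha : 0 < α - 1 := by linarith
  have hΓ0 := Real.Gamma_pos_of_pos ha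
  have hΓ : Real.Gamma α = (α - 1) * Real.Gamma (α - 1) := by
    rw [← Real.Gamma_add_one ha.ne', sub_add_cancel]
  have hcanc : ∀ r : ℝ, 0 < r → r ^ (α - 1 - 1) • r ^ (2 - α) • T r x = T r x := by
    intro r hr
    rw [smul_smul, ← Real.rpow_add hr, show α - 1 - 1 + (2 - α) = 0 by ring, Real.rpow_zero,
      one_smul]
  have H := average_tendsto ha (fun _ r => r ^ (2 - α) • T r x) ((Real.Gamma (α - 1))⁻¹ • x)
    ((hT.2.1 x).comp tendsto_snd) ?_
  · have H2 := H.const_smul (Real.Gamma (α - 1))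
    rw [smul_smul, mul_inv_cancel₀ hΓ0.ne', one_smul] at H2
    refine H2.congr' ?_
    filter_upwards [self_mem_nhdsWithin] with s hs
    have hs : 0 < s := hs
    rw [integral_congr_Ioo_of_le hs.le fun r hr => hcanc r hr.1, rl_one, smul_smul, hΓ,
      show -(α - 1) = 1 - α by ring]
    congr 1
    ring
  · filter_upwards [self_mem_nhdsWithin] with s hs
    have hs : 0 < s := hs
    have h1 := family_integrable hT hα hs x
    rw [intervalIntegrable_iff_integrableOn_Ioo_of_le hs.le] at h1 ⊢
    exact h1.congr (ae_restrict_of_forall_mem measurableSet_Ioo fun p hp => (hcanc p hp.1).symm)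

/-- The integral over `(0, s)` only sees `T` near `0` and yields the initial term `g_{α-1}(t) x`. -/
lemma initial_average_tendsto (hT : IsRLFracCosine α T) (hα : 1 < α) {t : ℝ} (ht : 0 < t) (x : X) :
    Tendsto (fun s => (Real.Gamma (α + 1) * s ^ (-α)) • (Real.Gamma (α - 1))⁻¹ •
      ∫ r in (0:ℝ)..s, (t + s - r) ^ (α - 1 - 1) • RLint 1 r (fun σ => T σ x)) (𝓝[>] 0)
      (𝓝 ((t ^ (α - 2) / Real.Gamma (α - 1)) • x)) := by
  have hα0 : 0 < α := by linarith
  have hΓ0 := Real.Gamma_pos_of_pos hα0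
  have hcanc : ∀ s r : ℝ, 0 < r → r ^ (α - 1) • ((t + (s - r)) ^ (α - 2) / Real.Gamma (α - 1)) •
      (Real.Gamma α * r ^ (1 - α)) • RLint 1 r (fun σ => T σ x) =
      (Real.Gamma α * (Real.Gamma (α - 1))⁻¹) •
        ((t + s - r) ^ (α - 1 - 1) • RLint 1 r (fun σ => T σ x)) := by
    intro s r hr
    have h1 : r ^ (α - 1) * r ^ (1 - α) = 1 := by
      rw [← Real.rpow_add hr, show α - 1 + (1 - α) = 0 by ring, Real.rpow_zero]
    rw [smul_smul, smul_smul, smul_smul, show α - 1 - 1 = α - 2 by ring, add_sub_assoc t s r]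
    congr 1
    linear_combination ((t + (s - r)) ^ (α - 2) / Real.Gamma (α - 1)) * Real.Gamma α * h1
  have H := average_tendsto hα0 (fun a r => ((t + a) ^ (α - 2) / Real.Gamma (α - 1)) •
      (Real.Gamma α * r ^ (1 - α)) • RLint 1 r (fun σ => T σ x))
    ((t ^ (α - 2) / Real.Gamma (α - 1)) • x) ?_ ?_
  · refine H.congr' ?_
    filter_upwards [self_mem_nhdsWithin] with s hs
    have hs : 0 < s := hs
    rw [integral_congr_Ioo_of_le hs.le fun r hr => hcanc s r hr.1, intervalIntegral.integral_smul,
      smul_smul, smul_smul, Real.Gamma_add_one hα0.ne']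
    congr 1
    ring
  · have h1 : Tendsto (fun a : ℝ => (t + a) ^ (α - 2) / Real.Gamma (α - 1)) (𝓝[≥] 0)
        (𝓝 (t ^ (α - 2) / Real.Gamma (α - 1))) := by
      have h3 : Tendsto (fun a : ℝ => t + a) (𝓝[≥] 0) (𝓝 (t + 0)) :=
        (Continuous.tendsto (by fun_prop) 0).mono_left nhdsWithin_le_nhds
      rw [add_zero] at h3
      exact (h3.rpow_const (Or.inl ht.ne')).div_const _
    exact (h1.comp tendsto_fst).smul ((primitive_tendsto hT hα x).comp tendsto_snd)
  · filter_upwards [self_mem_nhdsWithin] with s hs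
    have hs : 0 < s := hs
    have h0 := (family_semigroup hT hα one_pos one_pos hs x).1
    simp only [sub_self, Real.rpow_zero, one_smul] at h0
    have h1 := kernel_integrable (γ := α - 1 - 1) hs ht h0
    have h2 : IntervalIntegrable (fun r => (Real.Gamma α * (Real.Gamma (α - 1))⁻¹) •
        ((t + s - r) ^ (α - 1 - 1) • RLint 1 r (fun σ => T σ x))) volume 0 s :=
      ⟨h1.1.smul _, h1.2.smul _⟩
    rw [intervalIntegrable_iff_integrableOn_Ioo_of_le hs.le] at h2 ⊢
    exact h2.congr (ae_restrict_of_forall_mem measurableSet_Ioo fun p hp => (hcanc s p hp.1).symm)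

/-- The map `z ↦ J_t^a T(t)z` is linear and, by the bound `‖T(σ)‖ ≤ M σ^{α-2}`, bounded. -/
lemma rl_family_tendsto (hT : IsRLFracCosine α T) (hα : 1 < α) {a t : ℝ} (ha : 0 < a) (ht : 0 < t)
    {l : Filter ℝ} {c : ℝ → ℝ} {z : ℝ → X} {y : X} (hz : Tendsto (fun s => c s • z s) l (𝓝 y)) :
    Tendsto (fun s => c s • RLint a t (fun σ => T σ (z s))) l (𝓝 (RLint a t (fun σ => T σ y))) := by
  obtain ⟨M, hM0, hM⟩ := family_bound hT ht
  let L : X →ₗ[ℝ] X :=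
    { toFun := fun w => RLint a t (fun σ => T σ w)
      map_add' := fun v w => by
        simp only [RLint, map_add, smul_add]
        rw [intervalIntegral.integral_add (family_rl_integrable hT hα ha ht v)
          (family_rl_integrable hT hα ha ht w), smul_add]
      map_smul' := fun k w => by
        simp only [RLint, map_smul, RingHom.id_apply, smul_comm _ k, intervalIntegral.integral_smul] }
  have hL : ∀ w, ‖L w‖ ≤ ((Real.Gamma a)⁻¹ *
      (M * ∫ σ in (0:ℝ)..t, (t - σ) ^ (a - 1) * σ ^ (α - 1 - 1))) * ‖w‖ := by
    intro w
    have hΓ := Real.Gamma_pos_of_pos ha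
    change ‖RLint a t (fun σ => T σ w)‖ ≤ _
    rw [RLint, norm_smul, Real.norm_of_nonneg (inv_nonneg.2 hΓ.le), mul_assoc]
    refine mul_le_mul_of_nonneg_left ?_ (inv_nonneg.2 hΓ.le)
    rw [← intervalIntegral.integral_const_mul, ← intervalIntegral.integral_mul_const]
    refine intervalIntegral.norm_integral_le_of_norm_le ht.le ?_
      (((beta_integrable ha (sub_pos.2 hα) ht).const_mul _).mul_const _)
    filter_upwards with σ hσ
    have h1 := Real.rpow_nonneg (sub_nonneg.2 hσ.2) (a - 1)
    rw [norm_smul, Real.norm_of_nonneg h1]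
    calc _ ≤ (t - σ) ^ (a - 1) * (M * σ ^ (α - 1 - 1) * ‖w‖) := by
          gcongr
          exact (ContinuousLinearMap.le_opNorm _ _).trans
            (mul_le_mul_of_nonneg_right (hM σ hσ) (norm_nonneg _))
      _ = _ := by ring
  have h2 := ((L.mkContinuous _ hL).continuous.tendsto y).comp hz
  refine h2.congr fun s => ?_
  change L (c s • z s) = c s • L (z s)
  exact L.map_smul _ _

/-- For `x` in the domain of the generator, `rlDefect p = O(p^α)`, so the error term is
`O(s^{α+1})`. -/
lemma error_tendsto (hT : IsRLFracCosine α T) (hα : α ∈ Ioo (1:ℝ) 2) {t : ℝ} (ht : 0 < t) {x y : X}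
    (hxy : GenLimit α T x y) :
    Tendsto (fun s => (Real.Gamma (α + 1) * s ^ (-α)) •
      ∫ σ in (0:ℝ)..t, T σ (rlError α T x s (t - σ))) (𝓝[>] 0) (𝓝 0) := by
  have ha : 0 < α - 1 := by linarith [hα.1]
  have hα0 : 0 < α := by linarith [hα.1]
  have hΓa := Real.Gamma_pos_of_pos ha
  have hΓ := Real.Gamma_pos_of_pos (show 0 < α + 1 by linarith)
  obtain ⟨M, hM0, hM⟩ := family_bound hT ht
  set B := ∫ σ in (0:ℝ)..t, (t - σ) ^ (α - 1 - 1) * σ ^ (α - 1 - 1) with hB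
  have hB0 : 0 ≤ B := intervalIntegral.integral_nonneg ht.le fun σ hσ =>
    mul_nonneg (Real.rpow_nonneg (sub_nonneg.2 hσ.2) _) (Real.rpow_nonneg hσ.1 _)
  have h1 : ∀ᶠ s in 𝓝[>] (0:ℝ), ‖(Real.Gamma (α + 1) * s ^ (-α)) • rlDefect α T x s‖ < ‖y‖ + 1 :=
    (Tendsto.norm hxy).eventually_lt_const (by linarith)
  obtain ⟨δ, hδ, hδs⟩ := mem_nhdsGT_iff_exists_Ioo_subset.1 h1
  have hδ : 0 < δ := hδ
  -- `‖rlDefect p‖` is at most a constant multiple of `p ^ α` near `0`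
  have hbd : ∀ p ∈ Ioo 0 δ, Real.Gamma (α + 1) * ‖rlDefect α T x p‖ ≤ (‖y‖ + 1) * p ^ α := by
    intro p hp
    have h2 : ‖(Real.Gamma (α + 1) * p ^ (-α)) • rlDefect α T x p‖ < ‖y‖ + 1 := hδs hp
    have hp0 := Real.rpow_pos_of_pos hp.1 α
    rw [norm_smul, Real.norm_of_nonneg (by have := Real.rpow_nonneg hp.1.le (-α); positivity),
      Real.rpow_neg hp.1.le] at h2
    calc _ = Real.Gamma (α + 1) * (p ^ α)⁻¹ * ‖rlDefect α T x p‖ * p ^ α := by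
          field_simp
      _ ≤ _ := mul_le_mul_of_nonneg_right h2.le hp0.le
  have hlim : Tendsto (fun s : ℝ => ((‖y‖ + 1) * ((Real.Gamma (α - 1))⁻¹ * (M * B))) * s) (𝓝[>] 0)
      (𝓝 0) := by
    have : Tendsto (fun s : ℝ => ((‖y‖ + 1) * ((Real.Gamma (α - 1))⁻¹ * (M * B))) * s) (𝓝 0)
        (𝓝 (((‖y‖ + 1) * ((Real.Gamma (α - 1))⁻¹ * (M * B))) * 0)) :=
      Continuous.tendsto (by fun_prop) 0
    rw [mul_zero] at this
    exact this.mono_left nhdsWithin_le_nhds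
  refine squeeze_zero_norm' ?_ hlim
  filter_upwards [Ioo_mem_nhdsGT hδ] with s hs
  have hs0 := hs.1
  have hsα := Real.rpow_pos_of_pos hs0 α
  have h3 := (error_integral hT hα ht hs0 x).2 M hM0 hM
  have h4 : Real.Gamma (α + 1) * ∫ p in (0:ℝ)..s, ‖rlDefect α T x p‖ ≤
      (‖y‖ + 1) * s ^ α * s := by
    have h5 : ∫ p in (0:ℝ)..s, Real.Gamma (α + 1) * ‖rlDefect α T x p‖ ≤
        ∫ _p in (0:ℝ)..s, (‖y‖ + 1) * s ^ α := by
      refine intervalIntegral.integral_mono_on_of_le_Ioo hs0.le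
        ((defect_integrable hT hα hs0 x).norm.const_mul _) intervalIntegrable_const fun p hp => ?_
      refine (hbd p ⟨hp.1, hp.2.trans hs.2⟩).trans ?_
      exact mul_le_mul_of_nonneg_left (Real.rpow_le_rpow hp.1.le hp.2.le hα0.le) (by positivity)
    rw [intervalIntegral.integral_const_mul] at h5
    refine h5.trans (le_of_eq ?_)
    simp
    ring
  rw [norm_smul, Real.norm_of_nonneg (by have := Real.rpow_nonneg hs0.le (-α); positivity),
    Real.rpow_neg hs0.le]
  calc _ ≤ Real.Gamma (α + 1) * (s ^ α)⁻¹ *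
        (((Real.Gamma (α - 1))⁻¹ * ∫ p in (0:ℝ)..s, ‖rlDefect α T x p‖) * (M * B)) := by gcongr
    _ = (Real.Gamma (α + 1) * ∫ p in (0:ℝ)..s, ‖rlDefect α T x p‖) *
        ((s ^ α)⁻¹ * ((Real.Gamma (α - 1))⁻¹ * (M * B))) := by ring
    _ ≤ ((‖y‖ + 1) * s ^ α * s) * ((s ^ α)⁻¹ * ((Real.Gamma (α - 1))⁻¹ * (M * B))) := by gcongr
    _ = _ := by field_simp

end Limits

/-- For `x ∈ D(A)` and `t > 0`, `T(t)x = (t^{α-2}/Γ(α-1)) x + J_t^α T(t)Ax`. -/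
theorem rl_frac_cosine_solution_formula
    {X : Type*} [NormedAddCommGroup X] [NormedSpace ℝ X] [CompleteSpace X]
    (α : ℝ) (hα : α ∈ Set.Ioo (1:ℝ) 2) (T : ℝ → X →L[ℝ] X)
    (hT : IsRLFracCosine α T) :
    ∀ x y : X, GenLimit α T x y → ∀ t > (0:ℝ),
      T t x = (t ^ (α - 2) / Real.Gamma (α - 1)) • x +
        RLint α t (fun σ => T σ y) := by
  intro x y hxy t ht
  have hα0 : 0 < α := by linarith [hα.1]
  have hL := (forward_average_tendsto hT hα.1 ht x).sub (initial_average_tendsto hT hα.1 ht x)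
  have hy : Tendsto (fun s => (Real.Gamma (α + 1) * s ^ (-α)) • rlDefect α T x s) (𝓝[>] 0) (𝓝 y) :=
    hxy
  have hR := (rl_family_tendsto hT hα.1 hα0 ht hy).add (error_tendsto hT hα ht hxy)
  have hEq := tendsto_nhds_unique (hL.congr' ?_) hR
  · rw [add_zero] at hEq
    rw [← hEq]
    abel
  · filter_upwards [self_mem_nhdsWithin] with s hs
    rw [← smul_sub, ← smul_add, key_identity hT hα ht hs x]
end
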